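/- Let ‖·‖_P be a norm on ℝ² whose closed unit ball P is a quadrilateral with facets F_1, F_2, −F_1, −F_2, and let 𝒢 = (G,p,θ,τ) be a well-positioned 𝒞_2-symmetric bar-joint framework in (ℝ²,‖·‖_P), with quotient gain graph G_0. Then: (A) 𝒢 is χ_0-symmetrically isostatic if and only if the monochrome subgraphs G_{F_1,0} and G_{F_2,0} are edge-disjoint spanning unbalanced map graphs in G_0; (B) 𝒢 is χ_1-symmetrically isostatic if and only if G_{F_1,0} and G_{F_2,0} are edge-disjoint spanning trees in G_0; (C) (G,p) is infinitesimally rigid if and only if G_{F_1,0} and G_{F_2,0} both contain connected spanning unbalanced map graphs. -/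

import Mathlib

/-!
Statement 17 (Theorem 4.1 / thm:C2gridgeom): geometric characterisation of
`χ₀`- and `χ₁`-symmetric isostaticity and of infinitesimal rigidity for well-positioned
`𝒞₂`-symmetric frameworks in a plane with quadrilateral unit ball, in terms of the
induced monochrome subgraphs of the quotient gain graph.
-/

namespace ZGain

/-- A `ℤ₂`-gain graph: a finite multigraph with gains in `ℤˣ = {1, -1}` such that
parallel edges have different gains and loops have gain `-1`. -/
structure GainGraph where
  V : Type
  E : Type
  [fintV : Fintype V]
  [fintE : Fintype E]
  [decV : DecidableEq V]
  [decE : DecidableEq E]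
  ends : E → Sym2 V
  gain : E → ℤˣ
  loop_gain : ∀ e : E, (ends e).IsDiag → gain e = -1
  no_parallel : ∀ e e' : E, e ≠ e' → ends e = ends e' → gain e ≠ gain e'

attribute [instance] GainGraph.fintV GainGraph.fintE GainGraph.decV GainGraph.decE

/-- A cycle: a nonempty closed walk, recorded as a list of (edge, initial vertex)
pairs, with pairwise distinct edges and pairwise distinct vertices.  (A loop is a
cycle of length one; a pair of parallel edges is a cycle of length two.) -/
def IsCycle (G : GainGraph) (c : List (G.E × G.V)) : Prop :=
  ∃ h : c ≠ [],
    List.Chain' (fun st t => G.ends st.1 = s(st.2, t.2)) c ∧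
    G.ends (c.getLast h).1 = s((c.getLast h).2, (c.head h).2) ∧
    (c.map Prod.fst).Nodup ∧ (c.map Prod.snd).Nodup

/-- The gain of a cycle: the product of its edge gains. -/
def cycleGain (G : GainGraph) (c : List (G.E × G.V)) : ℤˣ :=
  (c.map fun st => G.gain st.1).prod

/-- An edge set is balanced if every cycle of edges in it has gain `1`. -/
def BalancedSet (G : GainGraph) (F : Finset G.E) : Prop :=
  ∀ c : List (G.E × G.V), IsCycle G c → (∀ st ∈ c, st.1 ∈ F) → cycleGain G c = 1

/-- The endpoints of an edge, as a finset. -/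
def endsFinset (G : GainGraph) (e : G.E) : Finset G.V :=
  Sym2.lift ⟨fun a b => {a, b}, fun a b => Finset.pair_comm a b⟩ (G.ends e)

/-- The set `V(F)` of vertices incident to an edge set `F`. -/
def vertsOf (G : GainGraph) (F : Finset G.E) : Finset G.V :=
  F.biUnion fun e => endsFinset G e

/-- `(2,2,0)`-gain-sparsity. -/
def Sparse220 (G : GainGraph) : Prop :=
  (∀ F : Finset G.E, F.Nonempty → BalancedSet G F →
      (F.card : ℤ) ≤ 2 * (vertsOf G F).card - 2) ∧
    (∀ F : Finset G.E, (F.card : ℤ) ≤ 2 * (vertsOf G F).card)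

/-- `(2,2,0)`-gain-tightness. -/
def Tight220 (G : GainGraph) : Prop :=
  Sparse220 G ∧ Fintype.card G.E = 2 * Fintype.card G.V

/-- `(2,2,2)`-gain-sparsity. -/
def Sparse222 (G : GainGraph) : Prop :=
  ∀ F : Finset G.E, F.Nonempty → (F.card : ℤ) ≤ 2 * (vertsOf G F).card - 2

/-- `(2,2,2)`-gain-tightness. -/
def Tight222 (G : GainGraph) : Prop :=
  Sparse222 G ∧ (Fintype.card G.E : ℤ) = 2 * Fintype.card G.V - 2

open scoped TensorProduct

/-! ### Subgraph connectivity, map graphs and trees in a `ℤ₂`-gain graph -/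

/-- One step along an edge of `S`. -/
def stepRel (Q : GainGraph) (S : Set Q.E) (u v : Q.V) : Prop :=
  ∃ e ∈ S, Q.ends e = s(u, v)

/-- The edge set `S` is a spanning unbalanced map graph: every cycle of edges of `S`
is unbalanced, and every connected component of the spanning subgraph `(V₀, S)`
contains exactly one cycle. -/
def SpanningUnbalancedMapGraph (Q : GainGraph) (S : Set Q.E) : Prop :=
  (∀ c, IsCycle Q c → (∀ st ∈ c, st.1 ∈ S) → cycleGain Q c ≠ 1) ∧
    ∀ v : Q.V,
      (∃ c, IsCycle Q c ∧ (∀ st ∈ c, st.1 ∈ S) ∧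
        ∃ st ∈ c, Relation.ReflTransGen (stepRel Q S) v st.2) ∧
      (∀ c c', IsCycle Q c → (∀ st ∈ c, st.1 ∈ S) →
        (∃ st ∈ c, Relation.ReflTransGen (stepRel Q S) v st.2) →
        IsCycle Q c' → (∀ st ∈ c', st.1 ∈ S) →
        (∃ st ∈ c', Relation.ReflTransGen (stepRel Q S) v st.2) →
        (c.map Prod.fst).toFinset = (c'.map Prod.fst).toFinset)

/-- The edge set `S` is a spanning tree of `Q`. -/
def SpanningTree (Q : GainGraph) (S : Set Q.E) : Prop :=
  (∀ u v : Q.V, Relation.ReflTransGen (stepRel Q S) u v) ∧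
    (∀ c, IsCycle Q c → ¬ ∀ st ∈ c, st.1 ∈ S)

/-- `S` contains a connected spanning unbalanced map graph. -/
def ContainsConnSpanningUnbalMap (Q : GainGraph) (S : Set Q.E) : Prop :=
  ∃ T ⊆ S, SpanningUnbalancedMapGraph Q T ∧
    ∀ u v : Q.V, Relation.ReflTransGen (stepRel Q T) u v

section C2Framework

variable {V : Type} [Fintype V] [DecidableEq V]
variable {X : Type} [NormedAddCommGroup X] [NormedSpace ℝ X]

/-! ### Frameworks and `𝒞₂`-symmetric rigidity -/

noncomputable def fG (G : SimpleGraph V) [Fintype G.edgeSet] (x : V → X) (e : G.edgeSet) : ℝ :=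
  Sym2.lift ⟨fun v w => ‖x v - x w‖, fun v w => by simp only []; rw [norm_sub_rev]⟩ e.1

noncomputable def WellPositioned (G : SimpleGraph V) [Fintype G.edgeSet] (p : V → X) : Prop :=
  DifferentiableAt ℝ (fG G) p

noncomputable def dfR (G : SimpleGraph V) [Fintype G.edgeSet] (p : V → X) :
    (V → X) →L[ℝ] (G.edgeSet → ℝ) :=
  fderiv ℝ (fG G) p

noncomputable def phiEdge (G : SimpleGraph V) [Fintype G.edgeSet] (p : V → X)
    (e : G.edgeSet) (v : V) : X →ₗ[ℝ] ℝ :=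
  (LinearMap.proj (R := ℝ) (φ := fun _ : G.edgeSet => ℝ) e).comp
    ((dfR G p).toLinearMap.comp (LinearMap.single ℝ (fun _ : V => X) v))

noncomputable def cplxFunctional (f : X →ₗ[ℝ] ℝ) : (ℂ ⊗[ℝ] X) →ₗ[ℂ] ℂ :=
  LinearMap.liftBaseChange ℂ ((Complex.ofRealCLM.toLinearMap).comp f)

noncomputable def dfC (G : SimpleGraph V) [Fintype G.edgeSet] (p : V → X) :
    (V → ℂ ⊗[ℝ] X) →ₗ[ℂ] (G.edgeSet → ℂ) :=
  LinearMap.pi fun e : G.edgeSet =>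
    ∑ v : V, (cplxFunctional (phiEdge G p e v)).comp
      (LinearMap.proj (R := ℂ) (φ := fun _ : V => ℂ ⊗[ℝ] X) v)

/-- The action of `γ ∈ ℤ₂ = {1,-1}` on vertices induced by the involution `σ`. -/
def act (σ : Equiv.Perm V) (γ : ℤˣ) (v : V) : V := if γ = 1 then v else σ v

/-- The action of the involution `σ` on the edge set. -/
def eSigma (G : SimpleGraph V) (σ : Equiv.Perm V)
    (hadj : ∀ u v : V, G.Adj u v ↔ G.Adj (σ u) (σ v)) (e : G.edgeSet) : G.edgeSet :=
  ⟨Sym2.map σ e.1, by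
    obtain ⟨e, he⟩ := e
    induction e using Sym2.ind with
    | _ u v => simpa using (hadj u v).1 (by simpa using he)⟩

/-- The action of `γ ∈ ℤ₂` on the edge set. -/
def eAct (G : SimpleGraph V) (σ : Equiv.Perm V)
    (hadj : ∀ u v : V, G.Adj u v ↔ G.Adj (σ u) (σ v)) (γ : ℤˣ) (e : G.edgeSet) :
    G.edgeSet :=
  if γ = 1 then e else eSigma G σ hadj e

/-- The character space `X_χ` for the `𝒞₂`-representation `τ(γ) = γ • I`. -/
noncomputable def XchiC2 (σ : Equiv.Perm V) (χ : ℤˣ →* ℂ) :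
    Submodule ℂ (V → ℂ ⊗[ℝ] X) :=
  ⨅ (γ : ℤˣ), ⨅ (v : V),
    LinearMap.ker
      ((LinearMap.proj (R := ℂ) (φ := fun _ : V => ℂ ⊗[ℝ] X) (act σ γ v)) -
        (χ γ * ((γ : ℤ) : ℂ)) • (LinearMap.proj (R := ℂ) (φ := fun _ : V => ℂ ⊗[ℝ] X) v))

/-- The character space `Y_χ`. -/
noncomputable def YchiC2 (G : SimpleGraph V) (σ : Equiv.Perm V)
    (hadj : ∀ u v : V, G.Adj u v ↔ G.Adj (σ u) (σ v)) (χ : ℤˣ →* ℂ) :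
    Submodule ℂ (G.edgeSet → ℂ) :=
  ⨅ (γ : ℤˣ), ⨅ (e : G.edgeSet),
    LinearMap.ker
      ((LinearMap.proj (R := ℂ) (φ := fun _ : G.edgeSet => ℂ) (eAct G σ hadj γ e)) -
        χ γ • (LinearMap.proj (R := ℂ) (φ := fun _ : G.edgeSet => ℂ) e))

def IsRigidMotion (α : X → ℝ → X) : Prop :=
  (∀ x : X, ContinuousOn (α x) (Set.Icc (-1 : ℝ) 1)) ∧
    (∀ x : X, α x 0 = x) ∧
    (∀ x y : X, ∀ t ∈ Set.Icc (-1 : ℝ) 1, ‖α x t - α y t‖ = ‖x - y‖)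

def IsInfRigidMotion (η : X → X) : Prop :=
  ∃ α : X → ℝ → X, IsRigidMotion α ∧ ∀ x : X, HasDerivAt (α x) (η x) 0

noncomputable def TXC (X : Type) [NormedAddCommGroup X] [NormedSpace ℝ X] :
    Submodule ℂ (X → ℂ ⊗[ℝ] X) :=
  Submodule.span ℂ
    {η' | ∃ η : X → X, IsInfRigidMotion η ∧ η' = fun x => (1 : ℂ) ⊗ₜ[ℝ] η x}

/-- The character space `𝒯_χ(X)` for the `𝒞₂`-representation `τ(γ) = γ • I`. -/
noncomputable def TchiC2 (X : Type) [NormedAddCommGroup X] [NormedSpace ℝ X]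
    (χ : ℤˣ →* ℂ) : Submodule ℂ (X → ℂ ⊗[ℝ] X) :=
  TXC X ⊓
    ⨅ (γ : ℤˣ), ⨅ (x : X),
      LinearMap.ker
        ((LinearMap.proj (R := ℂ) (φ := fun _ : X => ℂ ⊗[ℝ] X) ((γ : ℤ) • x)) -
          (χ γ * ((γ : ℤ) : ℂ)) •
            (LinearMap.proj (R := ℂ) (φ := fun _ : X => ℂ ⊗[ℝ] X) x))

noncomputable def rhoC (p : V → X) : (X → ℂ ⊗[ℝ] X) →ₗ[ℂ] (V → ℂ ⊗[ℝ] X) :=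
  LinearMap.pi fun v : V => LinearMap.proj (R := ℂ) (φ := fun _ : X => ℂ ⊗[ℝ] X) (p v)

/-- `χ`-symmetrically infinitesimally rigid (exactness at `X_χ`). -/
noncomputable def ChiRigidC2 (G : SimpleGraph V) [Fintype G.edgeSet] (p : V → X)
    (σ : Equiv.Perm V) (χ : ℤˣ →* ℂ) : Prop :=
  ∀ u ∈ XchiC2 (X := X) σ χ, dfC G p u = 0 →
    ∃ η ∈ TchiC2 X χ, rhoC (V := V) p η = u

/-- `χ`-symmetrically independent (exactness at `Y_χ`). -/
noncomputable def ChiIndependentC2 (G : SimpleGraph V) [Fintype G.edgeSet] (p : V → X)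
    (σ : Equiv.Perm V)
    (hadj : ∀ u v : V, G.Adj u v ↔ G.Adj (σ u) (σ v)) (χ : ℤˣ →* ℂ) : Prop :=
  ∀ y ∈ YchiC2 G σ hadj χ, ∃ u ∈ XchiC2 (X := X) σ χ, dfC G p u = y

/-- `χ`-symmetrically isostatic. -/
noncomputable def ChiIsostaticC2 (G : SimpleGraph V) [Fintype G.edgeSet] (p : V → X)
    (σ : Equiv.Perm V)
    (hadj : ∀ u v : V, G.Adj u v ↔ G.Adj (σ u) (σ v)) (χ : ℤˣ →* ℂ) : Prop :=
  ChiRigidC2 G p σ χ ∧ ChiIndependentC2 G p σ hadj χ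

/-- Infinitesimal rigidity of the underlying (real) framework. -/
noncomputable def InfRigid (G : SimpleGraph V) [Fintype G.edgeSet] (p : V → X) : Prop :=
  ∀ u : V → X, dfR G p u = 0 →
    ∃ η : X → X, IsInfRigidMotion η ∧ ∀ v : V, η (p v) = u v

/-- The trivial character `χ₀` of `ℤ₂`. -/
def chi0 : ℤˣ →* ℂ := 1

/-- The nontrivial character `χ₁` of `ℤ₂`. -/
def chi1 : ℤˣ →* ℂ := (Int.castRingHom ℂ).toMonoidHom.comp (Units.coeHom ℤ)

/-! ### Quadrilateral unit balls and framework colours -/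

/-- The two (independent) facets `F₁ = [a,b]`, `F₂ = [b,-a]` of the quadrilateral
unit ball `conv {a, b, -a, -b}`. -/
noncomputable def facet (a b : X) (i : Fin 2) : Set X :=
  if i = 0 then segment ℝ a b else segment ℝ b (-a)

/-- The edge `e` has framework colour `F_i`: the (normalised) difference of its
endpoint placements, or its negative, lies in the facet `F_i`. -/
noncomputable def EdgeColour (a b : X) (p : V → X) (i : Fin 2) (e : Sym2 V) : Prop :=
  ∃ u w : V, e = s(u, w) ∧
    (‖p u - p w‖⁻¹ • (p u - p w) ∈ facet a b i ∨
      -(‖p u - p w‖⁻¹ • (p u - p w)) ∈ facet a b i)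

/-- The monochrome edge set `G_{F_i,0}` of the quotient gain graph. -/
noncomputable def monochrome (G : SimpleGraph V) (a b : X) (p : V → X)
    (Q : GainGraph) (piE : G.edgeSet → Q.E) (i : Fin 2) : Set Q.E :=
  {ε : Q.E | ∃ e : G.edgeSet, piE e = ε ∧ EdgeColour a b p i e.1}

end C2Framework

/-! ### Walks, gains and solutions of the signed incidence system -/

section GainGraphTheory

variable {Q : GainGraph}

/-- A walk from `u` to `t`, recorded as a list of (edge, initial vertex) pairs. -/
def IsWalk (Q : GainGraph) : List (Q.E × Q.V) → Q.V → Q.V → Prop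
  | [], u, t => u = t
  | st :: l, u, t => st.2 = u ∧ ∃ x, Q.ends st.1 = s(u, x) ∧ IsWalk Q l x t

/-- The product of the values of `ψ` along the edges of a walk. -/
def walkGain (ψ : Q.E → ℤˣ) (l : List (Q.E × Q.V)) : ℤˣ :=
  (l.map fun st => ψ st.1).prod

@[simp] lemma walkGain_nil (ψ : Q.E → ℤˣ) : walkGain ψ [] = 1 := rfl

@[simp] lemma walkGain_cons (ψ : Q.E → ℤˣ) (st : Q.E × Q.V) (l : List (Q.E × Q.V)) :
    walkGain ψ (st :: l) = ψ st.1 * walkGain ψ l := by simp [walkGain]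

@[simp] lemma walkGain_append (ψ : Q.E → ℤˣ) (l l' : List (Q.E × Q.V)) :
    walkGain ψ (l ++ l') = walkGain ψ l * walkGain ψ l' := by simp [walkGain]

lemma walkGain_one (l : List (Q.E × Q.V)) : walkGain (fun _ => 1) l = 1 := by
  induction l with
  | nil => rfl
  | cons st l ih => simp [ih]

lemma isWalk_append {l l' : List (Q.E × Q.V)} {u t : Q.V} :
    IsWalk Q (l ++ l') u t ↔ ∃ x, IsWalk Q l u x ∧ IsWalk Q l' x t := by
  induction l generalizing u with
  | nil => simp [IsWalk]
  | cons st l ih =>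
    simp only [List.cons_append, IsWalk, ih]
    constructor
    · rintro ⟨h, x, hx, y, h1, h2⟩
      exact ⟨y, ⟨h, x, hx, h1⟩, h2⟩
    · rintro ⟨y, ⟨h, x, hx, h1⟩, h2⟩
      exact ⟨h, x, hx, y, h1, h2⟩

lemma isWalk_iff_chain (c : List (Q.E × Q.V)) (h : c ≠ []) (u t : Q.V) :
    IsWalk Q c u t ↔ (c.head h).2 = u ∧
      List.IsChain (fun st t => Q.ends st.1 = s(st.2, t.2)) c ∧
      Q.ends (c.getLast h).1 = s((c.getLast h).2, t) := by
  induction c generalizing u with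
  | nil => exact absurd rfl h
  | cons st l ih =>
    cases l with
    | nil =>
      simp only [IsWalk, List.head_cons, List.getLast_singleton, List.isChain_singleton, true_and]
      constructor
      · rintro ⟨rfl, x, hx, rfl⟩
        exact ⟨rfl, hx⟩
      · rintro ⟨rfl, hx⟩
        exact ⟨rfl, t, hx, rfl⟩
    | cons st' l =>
      have ih' := fun u => ih (by simp) u
      rw [IsWalk, List.isChain_cons_cons, List.getLast_cons (by simp)]
      simp only [ih', List.head_cons]
      constructor
      · rintro ⟨rfl, x, hx, rfl, h1, h2⟩
        exact ⟨rfl, ⟨hx, h1⟩, h2⟩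
      · rintro ⟨rfl, ⟨hx, h1⟩, h2⟩
        exact ⟨rfl, _, hx, rfl, h1, h2⟩

lemma isCycle_iff {c : List (Q.E × Q.V)} :
    IsCycle Q c ↔ c ≠ [] ∧ (∃ u, IsWalk Q c u u) ∧
      (c.map Prod.fst).Nodup ∧ (c.map Prod.snd).Nodup := by
  constructor
  · rintro ⟨h, h1, h2, h3⟩
    exact ⟨h, ⟨_, (isWalk_iff_chain c h _ _).2 ⟨rfl, h1, h2⟩⟩, h3⟩
  · rintro ⟨h, ⟨u, hu⟩, h3⟩
    obtain ⟨rfl, h1, h2⟩ := (isWalk_iff_chain c h _ _).1 hu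
    exact ⟨h, h1, h2, h3⟩

instance stepRel_symm (S : Set Q.E) : Std.Symm (stepRel Q S) where
  symm := by
    rintro u v ⟨e, he, h⟩
    exact ⟨e, he, by rw [h, Sym2.eq_swap]⟩

lemma reach_symm {S : Set Q.E} {u v : Q.V}
    (h : Relation.ReflTransGen (stepRel Q S) u v) :
    Relation.ReflTransGen (stepRel Q S) v u :=
  Relation.ReflTransGen.stdSymm.symm _ _ h

lemma reach_mono {S T : Set Q.E} (hST : S ⊆ T) {u v : Q.V}
    (h : Relation.ReflTransGen (stepRel Q S) u v) :
    Relation.ReflTransGen (stepRel Q T) u v :=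
  Relation.ReflTransGen.mono (fun _ _ ⟨e, he, h⟩ => ⟨e, hST he, h⟩) _ _ h

lemma exists_isWalk_of_reach {S : Set Q.E} {u v : Q.V}
    (h : Relation.ReflTransGen (stepRel Q S) u v) :
    ∃ l, IsWalk Q l u v ∧ ∀ st ∈ l, st.1 ∈ S := by
  induction h using Relation.ReflTransGen.head_induction_on with
  | refl => exact ⟨[], rfl, by simp⟩
  | head h _ ih =>
    obtain ⟨l, hl, hS⟩ := ih
    obtain ⟨e, he, h⟩ := h
    refine ⟨(e, _) :: l, ⟨rfl, _, h, hl⟩, ?_⟩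
    simpa [he] using hS

lemma IsWalk.reach {S : Set Q.E} {l : List (Q.E × Q.V)} {u v : Q.V}
    (h : IsWalk Q l u v) (hS : ∀ st ∈ l, st.1 ∈ S) :
    Relation.ReflTransGen (stepRel Q S) u v := by
  induction l generalizing u with
  | nil => rw [show u = v from h]
  | cons st l ih =>
    obtain ⟨-, x, hx, h⟩ := h
    exact .head ⟨st.1, hS st (by simp), hx⟩ (ih h fun st' h' => hS st' (by simp [h']))

lemma IsWalk.reach_mem {S : Set Q.E} {l : List (Q.E × Q.V)} {u v : Q.V}
    (h : IsWalk Q l u v) (hS : ∀ st ∈ l, st.1 ∈ S) {st : Q.E × Q.V} (hst : st ∈ l) :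
    Relation.ReflTransGen (stepRel Q S) u st.2 := by
  obtain ⟨l₁, l₂, rfl⟩ := List.append_of_mem hst
  obtain ⟨x, h1, h2, -⟩ := isWalk_append.1 h
  rw [h2]
  exact h1.reach fun st' h' => hS st' (by simp [h'])

lemma IsCycle.reach {S : Set Q.E} {c : List (Q.E × Q.V)} (hc : IsCycle Q c)
    (hS : ∀ st ∈ c, st.1 ∈ S) {st st' : Q.E × Q.V} (h : st ∈ c) (h' : st' ∈ c) :
    Relation.ReflTransGen (stepRel Q S) st.2 st'.2 := by
  obtain ⟨-, ⟨u, hu⟩, -⟩ := isCycle_iff.1 hc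
  exact (reach_symm (hu.reach_mem hS h)).trans (hu.reach_mem hS h')

lemma IsWalk.exists_reverse {l : List (Q.E × Q.V)} {u v : Q.V} (h : IsWalk Q l u v) :
    ∃ l', IsWalk Q l' v u ∧ (∀ ψ : Q.E → ℤˣ, walkGain ψ l' = walkGain ψ l) ∧
      ∀ st ∈ l', ∃ st' ∈ l, st'.1 = st.1 := by
  induction l generalizing u with
  | nil => exact ⟨[], h.symm, fun _ => rfl, by simp⟩
  | cons st l ih =>
    obtain ⟨-, x, hx, h⟩ := h
    obtain ⟨l', h1, h2, h3⟩ := ih h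
    refine ⟨l' ++ [(st.1, x)], isWalk_append.2 ⟨x, h1, rfl, u, ?_, rfl⟩, fun ψ => ?_, ?_⟩
    · rw [hx, Sym2.eq_swap]
    · simp [h2, mul_comm]
    · intro st' h'
      rcases List.mem_append.1 h' with h' | h'
      · obtain ⟨s, hs, hs'⟩ := h3 st' h'
        exact ⟨s, by simp [hs], hs'⟩
      · exact ⟨st, by simp, by rw [List.mem_singleton.1 h']⟩

lemma exists_split_of_not_nodup {α β : Type*} (f : α → β) {l : List α}
    (h : ¬ (l.map f).Nodup) :
    ∃ l₁ x l₂ y l₃, l = l₁ ++ x :: (l₂ ++ y :: l₃) ∧ f x = f y := by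
  induction l with
  | nil => simp at h
  | cons x l ih =>
    rw [List.map_cons, List.nodup_cons, not_and_or, not_not] at h
    rcases h with h | h
    · obtain ⟨y, hy, hxy⟩ := List.mem_map.1 h
      obtain ⟨l₂, l₃, rfl⟩ := List.append_of_mem hy
      exact ⟨[], x, l₂, y, l₃, rfl, hxy.symm⟩
    · obtain ⟨l₁, z, l₂, y, l₃, rfl, hxy⟩ := ih h
      exact ⟨x :: l₁, z, l₂, y, l₃, rfl, hxy⟩

lemma IsWalk.eq_nil_of_forall_ne {l : List (Q.E × Q.V)} {u v : Q.V} (h : IsWalk Q l u v)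
    (hne : ∀ st ∈ l, st.2 ≠ u) : l = [] := by
  cases l with
  | nil => rfl
  | cons st l => exact absurd h.1 (hne st (by simp))

/-- A closed walk with nontrivial gain and pairwise distinct vertices has pairwise
distinct edges. -/
lemma IsWalk.nodup_edges (ψ : Q.E → ℤˣ) {l : List (Q.E × Q.V)} {u : Q.V}
    (h : IsWalk Q l u u) (hψ : walkGain ψ l ≠ 1) (hV : (l.map Prod.snd).Nodup) :
    (l.map Prod.fst).Nodup := by
  by_contra hE
  obtain ⟨l₁, ⟨e, v⟩, l₂, ⟨e', v'⟩, l₃, rfl, hee : e = e'⟩ := exists_split_of_not_nodup _ hE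
  subst hee
  obtain ⟨_, h1, rfl, x, hx, h⟩ := isWalk_append.1 h
  obtain ⟨_, h2, rfl, x', hx', h3⟩ := isWalk_append.1 h
  simp only at h1 h2 h3 hx hx'
  simp only [List.map_append, List.map_cons, List.nodup_append, List.nodup_cons, List.mem_map,
    List.mem_append, List.mem_cons] at hV
  have hvv : v ≠ v' := by
    rintro rfl
    exact hV.2.1.1 (Or.inr (Or.inl rfl))
  rw [hx, Sym2.eq_iff] at hx'
  obtain ⟨h, -⟩ | ⟨rfl, rfl⟩ := hx'
  · exact hvv h
  obtain rfl : l₂ = [] := h2.eq_nil_of_forall_ne fun st hst he => by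
    exact hV.2.1.2.2.2 _ ⟨st, hst, rfl⟩ _ (Or.inl rfl) he
  obtain rfl : l₃ = [] := h3.eq_nil_of_forall_ne fun st hst he => by
    exact hV.2.1.1 (Or.inr (Or.inr ⟨st, hst, he⟩))
  obtain rfl : v = u := h3
  obtain rfl : l₁ = [] := h1.eq_nil_of_forall_ne fun st hst he => by
    exact hV.2.2 _ ⟨st, hst, rfl⟩ _ (Or.inl rfl) he
  simp at hψ

/-- A closed walk with nontrivial gain contains a cycle with nontrivial gain. -/
lemma IsWalk.exists_isCycle (ψ : Q.E → ℤˣ) {l : List (Q.E × Q.V)} {u : Q.V}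
    (h : IsWalk Q l u u) (hψ : walkGain ψ l ≠ 1) :
    ∃ c, IsCycle Q c ∧ walkGain ψ c ≠ 1 ∧ c ⊆ l := by
  by_cases hV : (l.map Prod.snd).Nodup
  · refine ⟨l, isCycle_iff.2 ⟨?_, ⟨u, h⟩, h.nodup_edges ψ hψ hV, hV⟩, hψ, fun _ => id⟩
    rintro rfl
    simp at hψ
  obtain ⟨l₁, ⟨e, v⟩, l₂, ⟨e', v'⟩, l₃, rfl, hvv : v = v'⟩ := exists_split_of_not_nodup _ hV
  subst hvv
  obtain ⟨_, h1, rfl, x, hx, h⟩ := isWalk_append.1 h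
  obtain ⟨_, h2, rfl, x', hx', h3⟩ := isWalk_append.1 h
  simp only at h1 h2 h3 hx hx'
  by_cases hin : walkGain ψ ((e, v) :: l₂) = 1
  · have hout : IsWalk Q (l₁ ++ (e', v) :: l₃) u u :=
      isWalk_append.2 ⟨v, h1, rfl, x', hx', h3⟩
    have hlen : (l₁ ++ (e', v) :: l₃).length < (l₁ ++ (e, v) :: (l₂ ++ (e', v) :: l₃)).length := by
      simp
    obtain ⟨c, hc, hc1, hcl⟩ := hout.exists_isCycle ψ (by
      intro hout
      apply hψ
      simp only [walkGain_append, walkGain_cons] at hin hout ⊢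
      calc walkGain ψ l₁ * (ψ e * (walkGain ψ l₂ * (ψ e' * walkGain ψ l₃)))
          = (ψ e * walkGain ψ l₂) * (walkGain ψ l₁ * (ψ e' * walkGain ψ l₃)) := by ac_rfl
        _ = 1 := by rw [hin, hout, one_mul])
    refine ⟨c, hc, hc1, fun st hst => ?_⟩
    have := hcl hst
    simp only [List.mem_append, List.mem_cons] at this ⊢
    tauto
  · have hin' : IsWalk Q ((e, v) :: l₂) v v := ⟨rfl, x, hx, h2⟩
    have hlen : ((e, v) :: l₂).length < (l₁ ++ (e, v) :: (l₂ ++ (e', v) :: l₃)).length := by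
      simp; omega
    obtain ⟨c, hc, hc1, hcl⟩ := hin'.exists_isCycle ψ hin
    refine ⟨c, hc, hc1, fun st hst => ?_⟩
    have := hcl hst
    simp only [List.mem_append, List.mem_cons] at this ⊢
    tauto
termination_by l.length

lemma walkGain_eq_one {ψ : Q.E → ℤˣ} {l : List (Q.E × Q.V)} (h : ∀ st ∈ l, ψ st.1 = 1) :
    walkGain ψ l = 1 := by
  apply List.prod_eq_one
  intro x hx
  obtain ⟨st, hst, rfl⟩ := List.mem_map.1 hx
  exact h st hst

/-- If the endpoints of `e ∈ S` are joined in `S \ {e}`, then `e` lies on a cycle of `S`. -/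
lemma exists_isCycle_through {S : Set Q.E} {e : Q.E} (he : e ∈ S) {u w : Q.V}
    (hends : Q.ends e = s(u, w))
    (h : Relation.ReflTransGen (stepRel Q (S \ {e})) u w) :
    ∃ c, IsCycle Q c ∧ (∀ st ∈ c, st.1 ∈ S) ∧ ∃ st ∈ c, st.1 = e := by
  obtain ⟨l, hl, hlS⟩ := exists_isWalk_of_reach h
  let ψ : Q.E → ℤˣ := fun f => if f = e then -1 else 1
  have hwalk : IsWalk Q ((e, w) :: l) w w := ⟨rfl, u, by rw [hends, Sym2.eq_swap], hl⟩
  have hgain : walkGain ψ ((e, w) :: l) ≠ 1 := by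
    have : walkGain ψ l = 1 := walkGain_eq_one fun st hst => if_neg (hlS st hst).2
    rw [walkGain_cons, this, show ψ (e, w).1 = -1 from if_pos rfl]
    decide
  obtain ⟨c, hc, hc1, hcl⟩ := hwalk.exists_isCycle ψ hgain
  refine ⟨c, hc, fun st hst => ?_, ?_⟩
  · rcases List.mem_cons.1 (hcl hst) with rfl | h'
    · exact he
    · exact (hlS st h').1
  · by_contra! hne
    exact hc1 (walkGain_eq_one fun st hst => if_neg (hne st hst))

/-- The remainder of a cycle after deleting one of its edges is a walk joining the endpoints. -/
lemma IsCycle.exists_walk_of_mem {c : List (Q.E × Q.V)} (hc : IsCycle Q c) {st : Q.E × Q.V}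
    (hst : st ∈ c) :
    ∃ x l, Q.ends st.1 = s(st.2, x) ∧ IsWalk Q l x st.2 ∧
      (∀ st' ∈ l, st' ∈ c ∧ st'.1 ≠ st.1) ∧
      ∀ ψ : Q.E → ℤˣ, walkGain ψ c = ψ st.1 * walkGain ψ l := by
  obtain ⟨-, ⟨u, hu⟩, hE, -⟩ := isCycle_iff.1 hc
  obtain ⟨l₁, l₂, rfl⟩ := List.append_of_mem hst
  obtain ⟨_, h1, rfl, x, hx, h2⟩ := isWalk_append.1 hu
  refine ⟨x, l₂ ++ l₁, hx, isWalk_append.2 ⟨u, h2, h1⟩, fun st' h' => ⟨?_, fun he => ?_⟩,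
    fun ψ => ?_⟩
  · simp only [List.mem_append, List.mem_cons] at h' ⊢
    tauto
  · simp only [List.map_append, List.map_cons, List.nodup_append, List.nodup_cons] at hE
    rcases List.mem_append.1 h' with h' | h'
    · exact hE.2.1.1 (he ▸ List.mem_map_of_mem h')
    · exact hE.2.2 _ (List.mem_map_of_mem h') _ (by simp) he
  · simp only [walkGain_append, walkGain_cons]
    ac_rfl

variable {K : Type*} [Field K]

/-- The vertex functions `g` with `g u = ψ e * g w` along every edge `e = uw` of `S`. -/
def GainSol (ψ : Q.E → ℤˣ) (S : Set Q.E) (g : Q.V → K) : Prop :=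
  ∀ e ∈ S, ∀ u w, Q.ends e = s(u, w) → g u = ((ψ e : ℤ) : K) * g w

lemma GainSol.mono {ψ : Q.E → ℤˣ} {S T : Set Q.E} {g : Q.V → K} (hST : S ⊆ T)
    (h : GainSol ψ T g) : GainSol ψ S g := fun e he => h e (hST he)

lemma unit_mul_self_cast (γ : ℤˣ) : ((γ : ℤ) : K) * ((γ : ℤ) : K) = 1 := by
  rcases Int.units_eq_one_or γ with rfl | rfl <;> simp

lemma eq_unit_mul_comm (γ : ℤˣ) {x y : K} (h : x = ((γ : ℤ) : K) * y) :
    y = ((γ : ℤ) : K) * x := by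
  rw [h, ← mul_assoc, unit_mul_self_cast, one_mul]

lemma GainSol.of_diff_singleton {ψ : Q.E → ℤˣ} {S : Set Q.E} {e : Q.E} {g : Q.V → K}
    (h : GainSol ψ (S \ {e}) g) {u w : Q.V} (hends : Q.ends e = s(u, w))
    (hg : g u = ((ψ e : ℤ) : K) * g w) : GainSol ψ S g := by
  intro f hf x y hxy
  by_cases hfe : f = e
  · subst hfe
    rw [hends, Sym2.eq_iff] at hxy
    rcases hxy with ⟨rfl, rfl⟩ | ⟨rfl, rfl⟩
    · exact hg
    · exact eq_unit_mul_comm _ hg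
  · exact h f ⟨hf, hfe⟩ x y hxy

lemma GainSol.walk {ψ : Q.E → ℤˣ} {S : Set Q.E} {g : Q.V → K} (hg : GainSol ψ S g)
    {l : List (Q.E × Q.V)} {u t : Q.V} (hl : IsWalk Q l u t) (hS : ∀ st ∈ l, st.1 ∈ S) :
    g u = ((walkGain ψ l : ℤ) : K) * g t := by
  induction l generalizing u with
  | nil => simp [show u = t from hl]
  | cons st l ih =>
    obtain ⟨-, x, hx, hl⟩ := hl
    rw [hg st.1 (hS st (by simp)) u x hx, ih hl fun st' h' => hS st' (by simp [h'])]
    simp [mul_assoc]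

lemma GainSol.eq_zero_of_reach {ψ : Q.E → ℤˣ} {S : Set Q.E} {g : Q.V → K}
    (hg : GainSol ψ S g) {u t : Q.V} (h : Relation.ReflTransGen (stepRel Q S) u t)
    (ht : g t = 0) : g u = 0 := by
  obtain ⟨l, hl, hS⟩ := exists_isWalk_of_reach h
  rw [hg.walk hl hS, ht, mul_zero]

lemma GainSol.eq_of_reach {S : Set Q.E} {g : Q.V → K}
    (hg : GainSol (fun _ => 1) S g) {u t : Q.V}
    (h : Relation.ReflTransGen (stepRel Q S) u t) : g u = g t := by
  obtain ⟨l, hl, hS⟩ := exists_isWalk_of_reach h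
  rw [hg.walk hl hS, walkGain_one]
  simp

/-- A solution extends over an edge of a balanced cycle. -/
lemma GainSol.of_isCycle {ψ : Q.E → ℤˣ} {S : Set Q.E} {g : Q.V → K}
    {c : List (Q.E × Q.V)} (hc : IsCycle Q c) (hS : ∀ st ∈ c, st.1 ∈ S)
    (hψ : walkGain ψ c = 1) {st : Q.E × Q.V} (hst : st ∈ c)
    (hg : GainSol ψ (S \ {st.1}) g) : GainSol ψ S g := by
  obtain ⟨x, l, hx, hl, hlc, hgain⟩ := hc.exists_walk_of_mem hst
  refine hg.of_diff_singleton hx (eq_unit_mul_comm _ ?_)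
  rw [hg.walk hl fun st' h' => ⟨hS st' (hlc st' h').1, (hlc st' h').2⟩]
  have h1 := hgain ψ
  rw [hψ, eq_comm, mul_eq_one_iff_eq_inv, Int.units_inv_eq_self] at h1
  rw [h1]

lemma GainSol.eq_zero_of_isCycle [CharZero K] {ψ : Q.E → ℤˣ} {S : Set Q.E} {g : Q.V → K}
    (hg : GainSol ψ S g) {c : List (Q.E × Q.V)} (hc : IsCycle Q c)
    (hS : ∀ st ∈ c, st.1 ∈ S) (hψ : walkGain ψ c ≠ 1) {st : Q.E × Q.V} (hst : st ∈ c) :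
    g st.2 = 0 := by
  obtain ⟨-, ⟨u, hu⟩, -⟩ := isCycle_iff.1 hc
  have h1 := hg.walk hu hS
  rw [(Int.units_eq_one_or _).resolve_left hψ] at h1
  push_cast at h1
  have h0 : g u = 0 := by
    have : (2 : K) * g u = 0 := by linear_combination h1
    simpa using this
  exact hg.eq_zero_of_reach (reach_symm (hu.reach_mem hS hst)) h0

/-- A component without cycles of nontrivial gain carries a nonzero solution. -/
lemma exists_gainSol_of_balanced (K : Type*) [Field K] (ψ : Q.E → ℤˣ) (S : Set Q.E) (v : Q.V)
    (h : ∀ c, IsCycle Q c → (∀ st ∈ c, st.1 ∈ S) →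
      (∃ st ∈ c, Relation.ReflTransGen (stepRel Q S) v st.2) → walkGain ψ c = 1) :
    ∃ g : Q.V → K, GainSol ψ S g ∧ g v = 1 := by
  classical
  have key : ∀ w l l', IsWalk Q l v w → (∀ st ∈ l, st.1 ∈ S) → IsWalk Q l' v w →
      (∀ st ∈ l', st.1 ∈ S) → walkGain ψ l = walkGain ψ l' := by
    intro w l l' hl hlS hl' hlS'
    by_contra hne
    obtain ⟨r, hr, hrg, hrS⟩ := hl'.exists_reverse
    have hw : IsWalk Q (l ++ r) v v := isWalk_append.2 ⟨w, hl, hr⟩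
    have hwS : ∀ st ∈ l ++ r, st.1 ∈ S := by
      intro st hst
      rcases List.mem_append.1 hst with h' | h'
      · exact hlS st h'
      · obtain ⟨s, hs, hs'⟩ := hrS st h'
        exact hs' ▸ hlS' s hs
    obtain ⟨c, hc, hc1, hcl⟩ := hw.exists_isCycle ψ (by
      rw [walkGain_append, hrg]
      intro h1
      apply hne
      rw [mul_eq_one_iff_eq_inv, Int.units_inv_eq_self] at h1
      exact h1)
    obtain ⟨hne', -⟩ := isCycle_iff.1 hc
    obtain ⟨st, hst⟩ := List.exists_mem_of_ne_nil c hne'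
    exact hc1 (h c hc (fun st hst => hwS st (hcl hst)) ⟨st, hst, hw.reach_mem hwS (hcl hst)⟩)
  let g : Q.V → K := fun w =>
    if hw : ∃ l, IsWalk Q l v w ∧ ∀ st ∈ l, st.1 ∈ S then ((walkGain ψ hw.choose : ℤ) : K) else 0
  have hgw : ∀ w l, IsWalk Q l v w → (∀ st ∈ l, st.1 ∈ S) → g w = ((walkGain ψ l : ℤ) : K) := by
    intro w l hl hlS
    have hw : ∃ l, IsWalk Q l v w ∧ ∀ st ∈ l, st.1 ∈ S := ⟨l, hl, hlS⟩
    simp only [g, dif_pos hw]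
    rw [key w _ l hw.choose_spec.1 hw.choose_spec.2 hl hlS]
  have hg0 : ∀ w, (¬ ∃ l, IsWalk Q l v w ∧ ∀ st ∈ l, st.1 ∈ S) → g w = 0 :=
    fun w hw => dif_neg hw
  have hext : ∀ e ∈ S, ∀ u w, Q.ends e = s(u, w) → ∀ l, IsWalk Q l v u → (∀ st ∈ l, st.1 ∈ S) →
      IsWalk Q (l ++ [(e, u)]) v w ∧ ∀ st ∈ l ++ [(e, u)], st.1 ∈ S := by
    intro e he u w hends l hl hlS
    refine ⟨isWalk_append.2 ⟨u, hl, rfl, w, hends, rfl⟩, fun st hst => ?_⟩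
    rcases List.mem_append.1 hst with h' | h'
    · exact hlS st h'
    · rw [List.mem_singleton.1 h']
      exact he
  refine ⟨g, fun e he u w hends => ?_, by simpa using hgw v [] rfl (by simp)⟩
  by_cases hu : ∃ l, IsWalk Q l v u ∧ ∀ st ∈ l, st.1 ∈ S
  · obtain ⟨l, hl, hlS⟩ := hu
    obtain ⟨h1, h2⟩ := hext e he u w hends l hl hlS
    apply eq_unit_mul_comm
    rw [hgw u l hl hlS, hgw w _ h1 h2]
    simp [mul_comm]
  · rw [hg0 u hu, hg0 w, mul_zero]
    rintro ⟨l, hl, hlS⟩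
    exact hu ⟨_, hext e he w u (by rw [hends, Sym2.eq_swap]) l hl hlS⟩

/-- The reachability class of a vertex solves the ungained system. -/
lemma gainSol_indicator_reach (K : Type*) [Field K] (S : Set Q.E) (v : Q.V) :
    GainSol (fun _ => 1) S
      (Set.indicator {w | Relation.ReflTransGen (stepRel Q S) v w} fun _ => (1 : K)) := by
  classical
  intro e he u w hends
  have : Relation.ReflTransGen (stepRel Q S) v u ↔ Relation.ReflTransGen (stepRel Q S) v w :=
    ⟨fun h => h.tail ⟨e, he, hends⟩, fun h => h.tail ⟨e, he, by rw [hends, Sym2.eq_swap]⟩⟩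
  simp [Set.indicator_apply, this]

lemma reach_of_isConst [CharZero K] {S : Set Q.E}
    (h : ∀ g : Q.V → K, GainSol (fun _ => 1) S g → ∀ u v, g u = g v) (u v : Q.V) :
    Relation.ReflTransGen (stepRel Q S) u v := by
  by_contra hv
  have h1 := h _ (gainSol_indicator_reach K S u) u v
  rw [Set.indicator_of_mem (by exact .refl), Set.indicator_of_notMem (by exact hv)] at h1
  exact one_ne_zero h1

/-- Deleting an edge of a cycle does not change reachability. -/
lemma IsCycle.reach_diff {S : Set Q.E} {c : List (Q.E × Q.V)} (hc : IsCycle Q c)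
    (hS : ∀ st ∈ c, st.1 ∈ S) {st : Q.E × Q.V} (hst : st ∈ c) {u v : Q.V}
    (h : Relation.ReflTransGen (stepRel Q S) u v) :
    Relation.ReflTransGen (stepRel Q (S \ {st.1})) u v := by
  obtain ⟨x, l, hx, hl, hlc, -⟩ := hc.exists_walk_of_mem hst
  have hr : Relation.ReflTransGen (stepRel Q (S \ {st.1})) x st.2 :=
    hl.reach fun st' h' => ⟨hS st' (hlc st' h').1, (hlc st' h').2⟩
  induction h with
  | refl => exact .refl
  | tail _ h ih =>
    obtain ⟨e, he, h⟩ := h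
    by_cases hee : e = st.1
    · rw [hee, hx, Sym2.eq_iff] at h
      rcases h with ⟨rfl, rfl⟩ | ⟨rfl, rfl⟩
      · exact ih.trans (reach_symm hr)
      · exact ih.trans hr
    · exact ih.tail ⟨e, ⟨he, hee⟩, h⟩

/-- An edge set admitting only the zero solution, and minimal with this property among the
deletions of cycle edges, is a spanning unbalanced map graph. -/
lemma spanningUnbalancedMapGraph_of_minimal [CharZero K] {S : Set Q.E}
    (hinj : ∀ g : Q.V → K, GainSol Q.gain S g → g = 0)
    (hmin : ∀ c, IsCycle Q c → (∀ st ∈ c, st.1 ∈ S) → ∀ st ∈ c,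
      ∃ g : Q.V → K, GainSol Q.gain (S \ {st.1}) g ∧ ¬ GainSol Q.gain S g) :
    SpanningUnbalancedMapGraph Q S := by
  have hunb : ∀ c, IsCycle Q c → (∀ st ∈ c, st.1 ∈ S) → cycleGain Q c ≠ 1 := by
    intro c hc hcS hc1
    obtain ⟨st, hst⟩ := List.exists_mem_of_ne_nil c (isCycle_iff.1 hc).1
    obtain ⟨g, hg, hg'⟩ := hmin c hc hcS st hst
    exact hg' (hg.of_isCycle hc hcS hc1 hst)
  have hsub : ∀ v c c', IsCycle Q c → (∀ st ∈ c, st.1 ∈ S) →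
        (∃ st ∈ c, Relation.ReflTransGen (stepRel Q S) v st.2) →
        IsCycle Q c' → (∀ st ∈ c', st.1 ∈ S) →
        (∃ st ∈ c', Relation.ReflTransGen (stepRel Q S) v st.2) →
        (c.map Prod.fst).toFinset ⊆ (c'.map Prod.fst).toFinset := by
    rintro v c c' hc hcS ⟨a, ha, hva⟩ hc' hcS' ⟨b, hb, hvb⟩ e he
    simp only [List.mem_toFinset, List.mem_map] at he ⊢
    obtain ⟨st, hst, rfl⟩ := he
    by_contra hne
    obtain ⟨g, hg, hg'⟩ := hmin c hc hcS st hst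
    obtain ⟨x, l, hx, -⟩ := hc.exists_walk_of_mem hst
    have hgb : g b.2 = 0 := hg.eq_zero_of_isCycle hc'
      (fun st' h' => ⟨hcS' st' h', fun h => hne ⟨st', h', h⟩⟩) (hunb c' hc' hcS') hb
    have hr : Relation.ReflTransGen (stepRel Q S) st.2 b.2 :=
      ((hc.reach hcS hst ha).trans (reach_symm hva)).trans hvb
    have hr' : Relation.ReflTransGen (stepRel Q S) x b.2 :=
      .head ⟨st.1, hcS st hst, by rw [hx, Sym2.eq_swap]⟩ hr
    have h1 := hg.eq_zero_of_reach (hc.reach_diff hcS hst hr) hgb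
    have h2 := hg.eq_zero_of_reach (hc.reach_diff hcS hst hr') hgb
    exact hg' (hg.of_diff_singleton hx (by rw [h1, h2, mul_zero]))
  refine ⟨hunb, fun v => ⟨?_, fun c c' hc hcS hcv hc' hcS' hcv' => ?_⟩⟩
  · by_contra hno
    obtain ⟨g, hg, hgv⟩ := exists_gainSol_of_balanced K Q.gain S v
      fun c hc hcS hcv => absurd ⟨c, hc, hcS, hcv⟩ hno
    rw [hinj g hg] at hgv
    simp at hgv
  · exact (hsub v c c' hc hcS hcv hc' hcS' hcv').antisymm
      (hsub v c' c hc' hcS' hcv' hc hcS hcv)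

lemma SpanningUnbalancedMapGraph.eq_zero [CharZero K] {S : Set Q.E}
    (h : SpanningUnbalancedMapGraph Q S) {g : Q.V → K} (hg : GainSol Q.gain S g) : g = 0 := by
  funext v
  obtain ⟨c, hc, hcS, st, hst, hr⟩ := (h.2 v).1
  exact hg.eq_zero_of_reach hr (hg.eq_zero_of_isCycle hc hcS (h.1 c hc hcS) hst)

lemma SpanningUnbalancedMapGraph.exists_gainSol [CharZero K] {S : Set Q.E}
    (h : SpanningUnbalancedMapGraph Q S) {e : Q.E} (he : e ∈ S) :
    ∃ g : Q.V → K, GainSol Q.gain (S \ {e}) g ∧ ¬ GainSol Q.gain S g := by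
  by_contra! hno
  have hcyc : ∀ v, ∃ c, IsCycle Q c ∧ (∀ st ∈ c, st.1 ∈ S \ {e}) ∧
      ∃ st ∈ c, Relation.ReflTransGen (stepRel Q (S \ {e})) v st.2 := by
    intro v
    by_contra hv
    obtain ⟨g, hg, hgv⟩ := exists_gainSol_of_balanced K Q.gain (S \ {e}) v
      fun c hc hcS hcv => absurd ⟨c, hc, hcS, hcv⟩ hv
    rw [h.eq_zero (hno g hg)] at hgv
    simp at hgv
  obtain ⟨⟨u, w⟩, huw⟩ := Quot.exists_rep (Q.ends e)
  replace huw : Q.ends e = s(u, w) := huw.symm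
  obtain ⟨c, hc, hcS, st, hst, hr⟩ := hcyc u
  obtain ⟨c', hc', hcS', st', hst', hr'⟩ := hcyc w
  have hdiff : S \ {e} ⊆ S := Set.sdiff_subset
  have huw' : Relation.ReflTransGen (stepRel Q S) u w := .single ⟨e, he, huw⟩
  have heq := (h.2 u).2 c c' hc (fun s hs => hdiff (hcS s hs)) ⟨st, hst, reach_mono hdiff hr⟩
    hc' (fun s hs => hdiff (hcS' s hs)) ⟨st', hst', huw'.trans (reach_mono hdiff hr')⟩
  have hmem : st.1 ∈ (c'.map Prod.fst).toFinset := by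
    rw [← heq, List.mem_toFinset]
    exact List.mem_map_of_mem hst
  rw [List.mem_toFinset, List.mem_map] at hmem
  obtain ⟨s₁, hs₁, hs₁e⟩ := hmem
  obtain ⟨x, -, hx, -⟩ := hc.exists_walk_of_mem hst
  obtain ⟨y, -, hy, -⟩ := hc'.exists_walk_of_mem hs₁
  have hjoin : Relation.ReflTransGen (stepRel Q (S \ {e})) st.2 s₁.2 := by
    rw [hs₁e, hx, Sym2.eq_iff] at hy
    rcases hy with ⟨h1, -⟩ | ⟨-, h1⟩
    · rw [h1]
    · exact .single ⟨st.1, hcS st hst, by rw [hx, h1]⟩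
  have hred : Relation.ReflTransGen (stepRel Q (S \ {e})) u w :=
    ((hr.trans hjoin).trans (hc'.reach hcS' hs₁ hst')).trans (reach_symm hr')
  obtain ⟨d, hd, hdS, s₂, hs₂, hs₂e⟩ := exists_isCycle_through he huw hred
  obtain ⟨z, -, hz, -⟩ := hd.exists_walk_of_mem hs₂
  have hus₂ : Relation.ReflTransGen (stepRel Q S) u s₂.2 := by
    rw [hs₂e, huw, Sym2.eq_iff] at hz
    rcases hz with ⟨h1, -⟩ | ⟨-, h1⟩
    · rw [h1]
    · rw [← h1]
      exact huw'
  have heq' := (h.2 u).2 d c hd hdS ⟨s₂, hs₂, hus₂⟩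
    hc (fun s hs => hdiff (hcS s hs)) ⟨st, hst, reach_mono hdiff hr⟩
  have hmem : e ∈ (c.map Prod.fst).toFinset := by
    rw [← heq', List.mem_toFinset, ← hs₂e]
    exact List.mem_map_of_mem hs₂
  rw [List.mem_toFinset, List.mem_map] at hmem
  obtain ⟨s₃, hs₃, hs₃e⟩ := hmem
  exact (hcS s₃ hs₃).2 hs₃e

/-- Spanning unbalanced map graphs are the edge sets whose gain incidence system is bijective. -/
lemma spanningUnbalancedMapGraph_iff (K : Type*) [Field K] [CharZero K] {S : Set Q.E} :
    SpanningUnbalancedMapGraph Q S ↔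
      (∀ g : Q.V → K, GainSol Q.gain S g → g = 0) ∧
      ∀ e ∈ S, ∃ g : Q.V → K, GainSol Q.gain (S \ {e}) g ∧ ¬ GainSol Q.gain S g :=
  ⟨fun h => ⟨fun _ => h.eq_zero, fun _ => h.exists_gainSol⟩, fun h =>
    spanningUnbalancedMapGraph_of_minimal h.1 fun _ _ hcS st hst => h.2 st.1 (hcS st hst)⟩

/-- Spanning trees are the edge sets whose incidence system is surjective with constant kernel. -/
lemma spanningTree_iff (K : Type*) [Field K] [CharZero K] {S : Set Q.E} :
    SpanningTree Q S ↔
      (∀ g : Q.V → K, GainSol (fun _ => 1) S g → ∀ u v, g u = g v) ∧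
      ∀ e ∈ S, ∃ g : Q.V → K, GainSol (fun _ => 1) (S \ {e}) g ∧ ¬ GainSol (fun _ => 1) S g := by
  constructor
  · rintro ⟨hconn, hcyc⟩
    refine ⟨fun g hg u v => hg.eq_of_reach (hconn u v), fun e he => ?_⟩
    obtain ⟨⟨u, w⟩, huw⟩ := Quot.exists_rep (Q.ends e)
    replace huw : Q.ends e = s(u, w) := huw.symm
    refine ⟨_, gainSol_indicator_reach K (S \ {e}) u, fun hg => ?_⟩
    have hg := hg.eq_of_reach (hconn u w)
    by_cases hr : Relation.ReflTransGen (stepRel Q (S \ {e})) u w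
    · obtain ⟨c, hc, hcS, -⟩ := exists_isCycle_through he huw hr
      exact hcyc c hc hcS
    · rw [Set.indicator_of_mem (by exact .refl), Set.indicator_of_notMem (by exact hr)] at hg
      exact one_ne_zero hg
  · rintro ⟨hconst, hmin⟩
    refine ⟨reach_of_isConst hconst, fun c hc hcS => ?_⟩
    obtain ⟨st, hst⟩ := List.exists_mem_of_ne_nil c (isCycle_iff.1 hc).1
    obtain ⟨g, hg, hg'⟩ := hmin st.1 (hcS st hst)
    exact hg' (hg.of_isCycle hc hcS (walkGain_one c) hst)

/-- An edge set contains a connected spanning unbalanced map graph iff it is connected and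
its gain incidence system is injective. -/
lemma containsConnSpanningUnbalMap_iff (K : Type*) [Field K] [CharZero K] {S : Set Q.E} :
    ContainsConnSpanningUnbalMap Q S ↔
      (∀ g : Q.V → K, GainSol (fun _ => 1) S g → ∀ u v, g u = g v) ∧
      ∀ g : Q.V → K, GainSol Q.gain S g → g = 0 := by
  constructor
  · rintro ⟨T, hTS, hT, hconn⟩
    exact ⟨fun g hg u v => (hg.mono hTS).eq_of_reach (hconn u v),
      fun g hg => hT.eq_zero (hg.mono hTS)⟩
  · rintro ⟨hconst, hinj⟩
    obtain ⟨T, hTS, hT⟩ := exists_minimal_le_of_wellFoundedLT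
      (fun T : Set Q.E => (∀ u v, Relation.ReflTransGen (stepRel Q T) u v) ∧
        ∀ g : Q.V → K, GainSol Q.gain T g → g = 0) S ⟨reach_of_isConst hconst, hinj⟩
    refine ⟨T, hTS, spanningUnbalancedMapGraph_of_minimal hT.prop.2 ?_, hT.prop.1⟩
    intro c hc hcT st hst
    by_contra! hno
    have hle := hT.le_of_le (y := T \ {st.1})
      ⟨fun u v => hc.reach_diff hcT hst (hT.prop.1 u v), fun g hg => hT.prop.2 g (hno g hg)⟩
      Set.sdiff_subset
    exact (hle (hcT st hst)).2 rfl

end GainGraphTheory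

section QuadrilateralNorm

variable {X : Type} [NormedAddCommGroup X] [NormedSpace ℝ X]

/-- Facet coordinates of a plane with quadrilateral unit ball: the functionals `φ i` cutting
out the facets, together with the dual vectors `d i`. -/
structure FacetCoords (a b : X) (φ : Fin 2 → X →ₗ[ℝ] ℝ) (d : Fin 2 → X) : Prop where
  apply_dual : ∀ i j, φ i (d j) = if i = j then 1 else 0
  sum_eq : ∀ x, ∑ i, φ i x • d i = x
  abs_le : ∀ i x, |φ i x| ≤ ‖x‖
  exists_abs_eq : ∀ x, ∃ i, |φ i x| = ‖x‖
  mem_facet : ∀ i x, x ∈ facet a b i ↔ φ i x = 1 ∧ ‖x‖ ≤ 1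

lemma norm_eq_of_closedBall_eq {N : X → ℝ} (hN : ∀ r : ℝ, 0 ≤ r → ∀ x, N (r • x) = r * N x)
    (hball : ∀ x : X, ‖x‖ ≤ 1 ↔ N x ≤ 1) (hpos : ∀ x, N x = 0 → x = 0) (hnn : ∀ x, 0 ≤ N x)
    (x : X) : ‖x‖ = N x := by
  have hle : ∀ r : ℝ, 0 < r → (‖x‖ ≤ r ↔ N x ≤ r) := by
    intro r hr
    have h := hball (r⁻¹ • x)
    rw [hN _ (by positivity), norm_smul, norm_inv, Real.norm_of_nonneg hr.le,
      inv_mul_le_iff₀ hr, inv_mul_le_iff₀ hr, mul_one] at h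
    exact h
  by_cases hx : x = 0
  · subst hx
    simpa using (hN 0 le_rfl 0).symm
  · refine le_antisymm ((hle _ ?_).2 le_rfl) ((hle _ (norm_pos_iff.2 hx)).1 le_rfl)
    exact lt_of_le_of_ne (hnn x) fun h => hx (hpos x h.symm)

lemma exists_facetCoords (hdim : Module.finrank ℝ X = 2) (a b : X)
    (hab : LinearIndependent ℝ ![a, b])
    (hball : Metric.closedBall (0 : X) 1 = convexHull ℝ {a, b, -a, -b}) :
    ∃ φ d, FacetCoords a b φ d := by
  let B := basisOfLinearIndependentOfCardEqFinrank hab (by simp [hdim])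
  have hB0 : B 0 = a := by simp [B]
  have hB1 : B 1 = b := by simp [B]
  set f := B.coord 0 with hf
  set g := B.coord 1 with hg
  have hfa : f a = 1 := by rw [hf, ← hB0]; simp
  have hfb : f b = 0 := by rw [hf, ← hB1]; simp
  have hga : g a = 0 := by rw [hg, ← hB0]; simp
  have hgb : g b = 1 := by rw [hg, ← hB1]; simp
  have hsum : ∀ x, f x • a + g x • b = x := by
    intro x
    have := B.sum_repr x
    rwa [Fin.sum_univ_two, hB0, hB1] at this
  have hN : ∀ x, ‖x‖ = |f x| + |g x| := by
    refine norm_eq_of_closedBall_eq (N := fun x => |f x| + |g x|) ?_ ?_ ?_ ?_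
    · intro r hr x
      simp only [map_smul, smul_eq_mul, abs_mul, abs_of_nonneg hr]
      ring
    · intro x
      rw [← mem_closedBall_zero_iff, hball]
      constructor
      · intro hx
        have hconv : Convex ℝ {x : X | |f x| + |g x| ≤ 1} := by
          intro x hx y hy s t hs ht hst
          simp only [Set.mem_ofPred_eq, map_add, map_smul, smul_eq_mul] at hx hy ⊢
          have h1 : |s * f x + t * f y| ≤ s * |f x| + t * |f y| := by
            refine (abs_add_le _ _).trans ?_
            rw [abs_mul, abs_mul, abs_of_nonneg hs, abs_of_nonneg ht]
          have h2 : |s * g x + t * g y| ≤ s * |g x| + t * |g y| := by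
            refine (abs_add_le _ _).trans ?_
            rw [abs_mul, abs_mul, abs_of_nonneg hs, abs_of_nonneg ht]
          nlinarith [mul_le_mul_of_nonneg_left hx hs, mul_le_mul_of_nonneg_left hy ht]
        refine convexHull_min ?_ hconv hx
        intro y hy
        simp only [Set.mem_insert_iff, Set.mem_singleton_iff] at hy
        rcases hy with rfl | rfl | rfl | rfl <;> simp [hfa, hfb, hga, hgb]
      · intro hx
        have hC : Convex ℝ (convexHull ℝ {a, b, -a, -b}) := convex_convexHull _ _
        have hmem : ∀ y ∈ ({a, b, -a, -b} : Set X), y ∈ convexHull ℝ {a, b, -a, -b} :=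
          fun y hy => subset_convexHull ℝ _ hy
        have ha := hmem a (by simp)
        have hb := hmem b (by simp)
        have hna := hmem (-a) (by simp)
        have hnb := hmem (-b) (by simp)
        have h0 : (0 : X) ∈ convexHull ℝ {a, b, -a, -b} := by
          have := hC ha hna (a := 1 / 2) (b := 1 / 2) (by norm_num) (by norm_num) (by norm_num)
          simpa using this
        have hsign : ∀ (t : ℝ) (y : X), y ∈ convexHull ℝ {a, b, -a, -b} →
            -y ∈ convexHull ℝ {a, b, -a, -b} →
            ∃ y' ∈ convexHull ℝ {a, b, -a, -b}, t • y = |t| • y' := by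
          intro t y hy hy'
          rcases le_total 0 t with ht | ht
          · exact ⟨y, hy, by rw [abs_of_nonneg ht]⟩
          · exact ⟨-y, hy', by rw [abs_of_nonpos ht, smul_neg, neg_smul, neg_neg]⟩
        obtain ⟨a', ha', haa⟩ := hsign (f x) a ha hna
        obtain ⟨b', hb', hbb⟩ := hsign (g x) b hb hnb
        have hfin := hC.sum_mem (t := Finset.univ) (w := ![|f x|, |g x|, 1 - (|f x| + |g x|)])
          (z := ![a', b', 0])
          (by intro i _; fin_cases i <;> (simp; try linarith))
          (by simp [Fin.sum_univ_three]) (by intro i _; fin_cases i <;> simp [ha', hb', h0])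
        simp only [Fin.sum_univ_three, Matrix.cons_val_zero, Matrix.cons_val_one,
          Matrix.cons_val_two, Matrix.head_cons, Matrix.tail_cons, smul_zero, add_zero] at hfin
        simpa [← haa, ← hbb, hsum] using hfin
    · intro x hx
      have h1 : f x = 0 := by
        rw [← abs_nonpos_iff]; linarith [abs_nonneg (f x), abs_nonneg (g x)]
      have h2 : g x = 0 := by
        rw [← abs_nonpos_iff]; linarith [abs_nonneg (f x), abs_nonneg (g x)]
      rw [← hsum x, h1, h2]
      simp
    · intro x
      positivity
  refine ⟨![f + g, g - f], ![(1 / 2 : ℝ) • (a + b), (1 / 2 : ℝ) • (b - a)], ?_, ?_, ?_, ?_, ?_⟩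
  · intro i j
    fin_cases i <;> fin_cases j <;> simp [hfa, hfb, hga, hgb] <;> norm_num
  · intro x
    conv_rhs => rw [← hsum x]
    simp only [Fin.sum_univ_two, Matrix.cons_val_zero, Matrix.cons_val_one,
      LinearMap.add_apply, LinearMap.sub_apply]
    module
  · intro i x
    rw [hN]
    fin_cases i
    · simpa using abs_add_le (f x) (g x)
    · simpa [add_comm] using abs_sub (g x) (f x)
  · intro x
    rw [hN]
    rcases le_total 0 (f x) with h1 | h1 <;> rcases le_total 0 (g x) with h2 | h2
    · exact ⟨0, by simp [abs_of_nonneg, h1, h2, add_nonneg]⟩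
    · refine ⟨1, ?_⟩
      simp only [Matrix.cons_val_one, Matrix.cons_val_fin_one, LinearMap.sub_apply]
      rw [abs_of_nonneg h1, abs_of_nonpos h2, abs_of_nonpos (by linarith)]
      ring
    · refine ⟨1, ?_⟩
      simp only [Matrix.cons_val_one, Matrix.cons_val_fin_one, LinearMap.sub_apply]
      rw [abs_of_nonpos h1, abs_of_nonneg h2, abs_of_nonneg (by linarith)]
      ring
    · refine ⟨0, ?_⟩
      simp only [Matrix.cons_val_zero, LinearMap.add_apply]
      rw [abs_of_nonpos h1, abs_of_nonpos h2, abs_of_nonpos (by linarith)]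
      ring
  · intro i x
    rw [hN]
    fin_cases i
    · simp only [Fin.zero_eta, Matrix.cons_val_zero, LinearMap.add_apply, facet, if_true]
      constructor
      · rintro ⟨s, t, hs, ht, hst, rfl⟩
        simp [hfa, hfb, hga, hgb, abs_of_nonneg, hs, ht, hst]
      · rintro ⟨h1, h2⟩
        refine ⟨f x, g x, ?_, ?_, h1, hsum x⟩
        · linarith [le_abs_self (g x), neg_abs_le (f x), le_abs_self (f x), abs_nonneg (f x)]
        · linarith [le_abs_self (g x), neg_abs_le (g x), le_abs_self (f x), abs_nonneg (f x)]
    · simp only [Fin.mk_one, Matrix.cons_val_one, Matrix.cons_val_fin_one, LinearMap.sub_apply, facet, one_ne_zero, if_false]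
      constructor
      · rintro ⟨s, t, hs, ht, hst, rfl⟩
        simp [hfa, hfb, hga, hgb, abs_of_nonneg, hs, ht, hst, add_comm t s]
      · rintro ⟨h1, h2⟩
        refine ⟨g x, -f x, ?_, ?_, by linarith, ?_⟩
        · linarith [le_abs_self (g x), neg_abs_le (f x), le_abs_self (f x), abs_nonneg (g x)]
        · linarith [le_abs_self (g x), neg_abs_le (g x), le_abs_self (f x), abs_nonneg (f x)]
        · conv_rhs => rw [← hsum x]
          module

variable {a b : X} {φ : Fin 2 → X →ₗ[ℝ] ℝ} {d : Fin 2 → X}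

lemma FacetCoords.ext (h : FacetCoords a b φ d) {x y : X} (hxy : ∀ i, φ i x = φ i y) : x = y := by
  rw [← h.sum_eq x, ← h.sum_eq y]
  simp [hxy]

lemma exists_unit_mul_eq_norm {i : Fin 2} {x : X} (hx : |φ i x| = ‖x‖) :
    ∃ s : ℤˣ, ((s : ℤ) : ℝ) * φ i x = ‖x‖ := by
  rcases abs_choice (φ i x) with h' | h'
  · exact ⟨1, by simp [← hx, h']⟩
  · exact ⟨-1, by simp [← hx, h']⟩

lemma FacetCoords.unit_mul_le_norm (h : FacetCoords a b φ d) (s : ℤˣ) (i : Fin 2) (x : X) :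
    ((s : ℤ) : ℝ) * φ i x ≤ ‖x‖ := by
  refine le_trans ?_ (h.abs_le i x)
  rcases Int.units_eq_one_or s with rfl | rfl
  · simpa using le_abs_self _
  · simpa using neg_le_abs _

/-- Infinitesimal rigid motions of a plane with quadrilateral unit ball are translations. -/
lemma IsInfRigidMotion.eq_const [FiniteDimensional ℝ X] (h : FacetCoords a b φ d) {η : X → X}
    (hη : IsInfRigidMotion η) (x y : X) : η x = η y := by
  obtain ⟨α, ⟨-, hα0, hα⟩, hder⟩ := hη
  have key : ∀ i x y, |φ i (x - y)| = ‖x - y‖ → φ i (η x) = φ i (η y) := by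
    intro i x y hxy
    obtain ⟨s, hs⟩ := exists_unit_mul_eq_norm hxy
    have hd : HasDerivAt (fun t => ((s : ℤ) : ℝ) * φ i (α x t - α y t))
        (((s : ℤ) : ℝ) * φ i (η x - η y)) 0 := by
      have h1 := ((φ i).toContinuousLinearMap.hasFDerivAt (x := α x 0 - α y 0)).comp_hasDerivAt
        (0 : ℝ) ((hder x).sub (hder y))
      exact h1.const_mul _
    have hmax : IsLocalMax (fun t => ((s : ℤ) : ℝ) * φ i (α x t - α y t)) 0 := by
      filter_upwards [Icc_mem_nhds (show (-1 : ℝ) < 0 by norm_num) (show (0 : ℝ) < 1 by norm_num)]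
        with t ht
      rw [hα0, hα0, hs, ← hα x y t ht]
      exact h.unit_mul_le_norm s i _
    have h0 := hmax.hasDerivAt_eq_zero hd
    rw [mul_eq_zero, map_sub, sub_eq_zero] at h0
    refine h0.resolve_left ?_
    exact_mod_cast s.ne_zero
  refine h.ext fun i => ?_
  have hdom : ∀ v : X, ∀ r, ‖v‖ ≤ r / 2 → |φ i (r • d i + v)| = ‖r • d i + v‖ := by
    intro v r hr
    obtain ⟨j, hj⟩ := h.exists_abs_eq (r • d i + v)
    refine le_antisymm (h.abs_le i _) ?_
    rw [← hj]
    by_cases hij : j = i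
    · rw [hij]
    · simp only [map_add, map_smul, h.apply_dual, hij, if_false, if_true, smul_eq_mul, mul_zero,
        mul_one, zero_add]
      have h1 := (h.abs_le j v).trans hr
      have h2 := abs_le.1 ((h.abs_le i v).trans hr)
      exact (h1.trans (by linarith)).trans (le_abs_self (r + φ i v))
  set r := 2 * ‖x - y‖ with hr
  have h1 := key i (x + r • d i) x (by
    have := hdom 0 r (by simp [hr])
    simpa using this)
  have h2 := key i (x + r • d i) y (by
    have := hdom (x - y) r (by simp [hr])
    rwa [show x + r • d i - y = r • d i + (x - y) by abel])
  rw [← h1, h2]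

lemma isInfRigidMotion_const (c : X) : IsInfRigidMotion fun _ : X => c := by
  refine ⟨fun x t => x + t • c, ⟨fun x => by fun_prop, by simp, by simp⟩, fun x => ?_⟩
  have := ((hasDerivAt_id (0 : ℝ)).smul_const c).const_add x
  simpa using this

lemma mem_TXC_iff [FiniteDimensional ℝ X] (h : FacetCoords a b φ d) (η : X → ℂ ⊗[ℝ] X) :
    η ∈ TXC X ↔ ∃ z, η = fun _ => z := by
  constructor
  · intro hη
    induction hη using Submodule.span_induction with
    | mem η' hη' =>
      obtain ⟨η, hη, rfl⟩ := hη'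
      exact ⟨1 ⊗ₜ η 0, funext fun x => by rw [hη.eq_const h x 0]⟩
    | zero => exact ⟨0, rfl⟩
    | add _ _ _ _ h1 h2 =>
      obtain ⟨z, rfl⟩ := h1
      obtain ⟨w, rfl⟩ := h2
      exact ⟨z + w, rfl⟩
    | smul c _ _ h1 =>
      obtain ⟨z, rfl⟩ := h1
      exact ⟨c • z, rfl⟩
  · rintro ⟨z, rfl⟩
    induction z using TensorProduct.induction_on with
    | zero => exact zero_mem _
    | tmul c x =>
      have h1 : (fun _ : X => (1 : ℂ) ⊗ₜ[ℝ] x) ∈ TXC X :=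
        Submodule.subset_span ⟨fun _ => x, isInfRigidMotion_const x, rfl⟩
      have h2 := Submodule.smul_mem _ c h1
      convert h2 using 1
      funext _
      simp [TensorProduct.smul_tmul']
    | add z w hz hw => exact Submodule.add_mem _ hz hw

/-! ### Complexified facet coordinates -/

lemma cplxFunctional_tmul (f : X →ₗ[ℝ] ℝ) (c : ℂ) (x : X) :
    cplxFunctional f (c ⊗ₜ x) = c * (f x : ℂ) := by
  simp [cplxFunctional]

lemma cplxFunctional_smul (c : ℝ) (f : X →ₗ[ℝ] ℝ) (z : ℂ ⊗[ℝ] X) :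
    cplxFunctional (c • f) z = (c : ℂ) * cplxFunctional f z := by
  induction z using TensorProduct.induction_on with
  | zero => simp
  | tmul c x => simp only [cplxFunctional_tmul, LinearMap.smul_apply, smul_eq_mul]; push_cast; ring
  | add z w hz hw => rw [map_add, map_add, hz, hw, mul_add]

lemma FacetCoords.sum_cplx_eq (h : FacetCoords a b φ d) (z : ℂ ⊗[ℝ] X) :
    ∑ i, cplxFunctional (φ i) z • ((1 : ℂ) ⊗ₜ[ℝ] d i) = z := by
  induction z using TensorProduct.induction_on with
  | zero => simp
  | tmul c x =>
    conv_rhs => rw [← h.sum_eq x]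
    rw [TensorProduct.tmul_sum]
    refine Finset.sum_congr rfl fun i _ => ?_
    rw [cplxFunctional_tmul, TensorProduct.smul_tmul', ← TensorProduct.smul_tmul]
    congr 1
    simp [mul_comm]
  | add z w hz hw =>
    simp only [map_add, add_smul, Finset.sum_add_distrib, hz, hw]

lemma FacetCoords.cplx_ext (h : FacetCoords a b φ d) {z w : ℂ ⊗[ℝ] X}
    (hzw : ∀ i, cplxFunctional (φ i) z = cplxFunctional (φ i) w) : z = w := by
  rw [← h.sum_cplx_eq z, ← h.sum_cplx_eq w]
  simp [hzw]

lemma FacetCoords.cplx_apply_sum (h : FacetCoords a b φ d) (c : Fin 2 → ℂ) (i : Fin 2) :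
    cplxFunctional (φ i) (∑ j, c j • ((1 : ℂ) ⊗ₜ[ℝ] d j)) = c i := by
  simp only [map_sum, map_smul, cplxFunctional_tmul, h.apply_dual]
  fin_cases i <;> simp

end QuadrilateralNorm

section Colouring

variable {V : Type}
variable {X : Type} [NormedAddCommGroup X] [NormedSpace ℝ X]
variable {a b : X} {φ : Fin 2 → X →ₗ[ℝ] ℝ} {d : Fin 2 → X}
variable {G : SimpleGraph V} {p : V → X}

lemma edgeColour_iff (h : FacetCoords a b φ d) (hpinj : Function.Injective p)
    {u w : V} (huw : u ≠ w) (i : Fin 2) :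
    EdgeColour a b p i s(u, w) ↔ |φ i (p u - p w)| = ‖p u - p w‖ := by
  have hone : ∀ x : X, x ≠ 0 →
      ((‖x‖⁻¹ • x ∈ facet a b i ∨ -(‖x‖⁻¹ • x) ∈ facet a b i) ↔ |φ i x| = ‖x‖) := by
    intro x hx
    have hx' : 0 < ‖x‖ := norm_pos_iff.2 hx
    have hn : ‖‖x‖⁻¹ • x‖ = 1 := by
      rw [norm_smul, norm_inv, norm_norm, inv_mul_cancel₀ hx'.ne']
    rw [h.mem_facet, h.mem_facet, norm_neg, hn, map_neg, map_smul, smul_eq_mul, abs_eq hx'.le]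
    simp only [le_refl, and_true]
    rw [inv_mul_eq_iff_eq_mul₀ hx'.ne', neg_eq_iff_eq_neg, inv_mul_eq_iff_eq_mul₀ hx'.ne']
    simp only [mul_one, mul_neg]
  have hne : p u - p w ≠ 0 := sub_ne_zero.2 (hpinj.ne huw)
  rw [← hone _ hne]
  constructor
  · rintro ⟨u', w', he, h'⟩
    rw [Sym2.eq_iff] at he
    rcases he with ⟨rfl, rfl⟩ | ⟨rfl, rfl⟩
    · exact h'
    · rw [hone _ hne]
      rw [hone _ (by rw [← neg_sub]; exact neg_ne_zero.2 hne)] at h'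
      rwa [← neg_sub (p w) (p u), map_neg, abs_neg, norm_neg]
  · exact fun h' => ⟨u, w, rfl, h'⟩

variable [Fintype V] [Fintype G.edgeSet]

/-- The differential of the edge length at an edge lying in the cone of the facet `i`. -/
lemma dfR_apply [FiniteDimensional ℝ X] (h : FacetCoords a b φ d) (hwp : WellPositioned G p)
    (e : G.edgeSet) {u w : V} (he : (e : Sym2 V) = s(u, w)) {i : Fin 2} {s : ℤˣ}
    (hs : ((s : ℤ) : ℝ) * φ i (p u - p w) = ‖p u - p w‖) (x : V → X) :
    dfR G p x e = ((s : ℤ) : ℝ) * φ i (x u - x w) := by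
  have hfG : ∀ x : V → X, fG G x e = ‖x u - x w‖ := by
    intro x
    rw [fG, he]
    rfl
  let L : (V → X) →ₗ[ℝ] ℝ :=
    ((s : ℤ) : ℝ) • (φ i).comp (LinearMap.proj (R := ℝ) (φ := fun _ : V => X) u -
      LinearMap.proj (R := ℝ) (φ := fun _ : V => X) w)
  have hL : ∀ x, L x = ((s : ℤ) : ℝ) * φ i (x u - x w) := fun x => rfl
  have hd1 : HasFDerivAt (fun x => fG G x e)
      ((ContinuousLinearMap.proj e).comp (dfR G p)) p := by
    have := hasFDerivAt_pi'.1 (show DifferentiableAt ℝ (fG G) p from hwp).hasFDerivAt e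
    exact this
  have hd2 := hd1.sub L.toContinuousLinearMap.hasFDerivAt
  have hmin : IsLocalMin (fun x => fG G x e - L.toContinuousLinearMap x) p := by
    refine Filter.Eventually.of_forall fun x => ?_
    simp only [LinearMap.coe_toContinuousLinearMap', hL, hfG, hs, sub_self]
    exact sub_nonneg.2 (h.unit_mul_le_norm s i _)
  have h0 := congrArg (fun f => f x) (hmin.hasFDerivAt_eq_zero hd2)
  simp only [sub_apply, ContinuousLinearMap.comp_apply,
    ContinuousLinearMap.proj_apply, zero_apply,
    LinearMap.coe_toContinuousLinearMap', hL, sub_eq_zero] at h0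
  exact h0

lemma dfC_apply [DecidableEq V] {i : Fin 2} {s : ℝ} (e : G.edgeSet) {u w : V}
    (hdf : ∀ x, dfR G p x e = s * φ i (x u - x w)) (z : V → ℂ ⊗[ℝ] X) :
    dfC G p z e = (s : ℂ) * (cplxFunctional (φ i) (z u) - cplxFunctional (φ i) (z w)) := by
  have hphi : ∀ v, phiEdge G p e v =
      (s * ((if u = v then 1 else 0) - (if w = v then 1 else 0)) : ℝ) • φ i := by
    intro v
    ext x
    change dfR G p (Pi.single v x) e = _
    rw [hdf, Pi.single_apply, Pi.single_apply, LinearMap.smul_apply, smul_eq_mul]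
    split_ifs <;> simp
  simp only [dfC, LinearMap.pi_apply, LinearMap.sum_apply, LinearMap.comp_apply,
    LinearMap.proj_apply, hphi, cplxFunctional_smul]
  push_cast
  simp [mul_sub, sub_mul, Finset.sum_sub_distrib, apply_ite ((↑) : ℝ → ℂ)]

/-- Every edge of a well-positioned framework has exactly one framework colour. -/
lemma existsUnique_edgeColour [FiniteDimensional ℝ X] (h : FacetCoords a b φ d)
    (hpinj : Function.Injective p) (hwp : WellPositioned G p) (e : G.edgeSet) :
    ∃ i, ∀ j, EdgeColour a b p j e ↔ j = i := by
  classical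
  obtain ⟨⟨u, w⟩, he⟩ := Quot.exists_rep e.1
  replace he : (e : Sym2 V) = s(u, w) := he.symm
  have huw : u ≠ w := by
    have := e.2
    rw [he] at this
    exact G.ne_of_adj this
  simp only [he, edgeColour_iff h hpinj huw]
  obtain ⟨i, hi⟩ := h.exists_abs_eq (p u - p w)
  refine ⟨i, fun j => ⟨fun hj => ?_, fun hj => hj ▸ hi⟩⟩
  by_contra hij
  obtain ⟨s, hs⟩ := exists_unit_mul_eq_norm hi
  obtain ⟨t, ht⟩ := exists_unit_mul_eq_norm hj
  have h1 := dfR_apply h hwp e he hs (Pi.single u (d i))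
  rw [dfR_apply h hwp e he ht (Pi.single u (d i))] at h1
  simp [h.apply_dual, hij, huw.symm] at h1
  exact s.ne_zero (by exact_mod_cast h1.symm)

end Colouring

section Quotient

variable {V : Type}
variable {X : Type} [NormedAddCommGroup X] [NormedSpace ℝ X]

lemma mem_XchiC2_iff {σ : Equiv.Perm V} {χ : ℤˣ →* ℂ} {c : ℤˣ} (hc : χ (-1) = ((c : ℤ) : ℂ))
    (z : V → ℂ ⊗[ℝ] X) :
    z ∈ XchiC2 σ χ ↔ ∀ v, z (σ v) = (-((c : ℤ) : ℂ)) • z v := by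
  simp only [XchiC2, Submodule.mem_iInf, LinearMap.mem_ker, LinearMap.sub_apply,
    LinearMap.smul_apply, LinearMap.proj_apply, sub_eq_zero]
  constructor
  · intro h v
    have := h (-1) v
    rw [hc] at this
    simpa [act] using this
  · intro h γ v
    rcases Int.units_eq_one_or γ with rfl | rfl
    · simp [act]
    · rw [hc]
      simpa [act] using h v

lemma mem_YchiC2_iff {G : SimpleGraph V} {σ : Equiv.Perm V}
    {hadj : ∀ u v : V, G.Adj u v ↔ G.Adj (σ u) (σ v)} {χ : ℤˣ →* ℂ} {c : ℤˣ}
    (hc : χ (-1) = ((c : ℤ) : ℂ)) (y : G.edgeSet → ℂ) :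
    y ∈ YchiC2 G σ hadj χ ↔ ∀ e, y (eSigma G σ hadj e) = ((c : ℤ) : ℂ) * y e := by
  simp only [YchiC2, Submodule.mem_iInf, LinearMap.mem_ker, LinearMap.sub_apply,
    LinearMap.smul_apply, LinearMap.proj_apply, sub_eq_zero, smul_eq_mul]
  constructor
  · intro h e
    have := h (-1) e
    rw [hc] at this
    simpa [eAct] using this
  · intro h γ e
    rcases Int.units_eq_one_or γ with rfl | rfl
    · simp [eAct]
    · rw [hc]
      simpa [eAct] using h e

/-- The half-turn symmetric framework data used in the proofs: facet coordinates, the quotient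
graph, and the colour of each edge orbit. -/
structure QuotientData (a b : X) (φ : Fin 2 → X →ₗ[ℝ] ℝ) (d : Fin 2 → X) (G : SimpleGraph V)
    [Fintype G.edgeSet] (σ : Equiv.Perm V)
    (hadj : ∀ u v : V, G.Adj u v ↔ G.Adj (σ u) (σ v)) (p : V → X) (Q : GainGraph)
    (piV : V → Q.V) (piE : G.edgeSet → Q.E) (col : Q.E → Fin 2) : Prop where
  coords : FacetCoords a b φ d
  invol : ∀ v, σ (σ v) = v
  free : ∀ e : G.edgeSet, eSigma G σ hadj e ≠ e
  inj : Function.Injective p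
  symm : ∀ v, p (σ v) = -p v
  surjV : Function.Surjective piV
  piV_eq : ∀ u v : V, piV u = piV v ↔ (v = u ∨ v = σ u)
  surjE : Function.Surjective piE
  piE_eq : ∀ e f : G.edgeSet, piE e = piE f ↔ (f = e ∨ f = eSigma G σ hadj e)
  ends_eq : ∀ e : G.edgeSet, Q.ends (piE e) = Sym2.map piV e.1
  dfR_eq : ∀ (e : G.edgeSet) (u w : V), (e : Sym2 V) = s(u, w) → ∃ s : ℤˣ,
    ((s : ℤ) : ℝ) * φ (col (piE e)) (p u - p w) = ‖p u - p w‖ ∧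
    ∀ x, dfR G p x e = ((s : ℤ) : ℝ) * φ (col (piE e)) (x u - x w)

namespace QuotientData

variable {a b : X} {φ : Fin 2 → X →ₗ[ℝ] ℝ} {d : Fin 2 → X} {G : SimpleGraph V}
  [Fintype G.edgeSet] {σ : Equiv.Perm V} {hadj : ∀ u v : V, G.Adj u v ↔ G.Adj (σ u) (σ v)}
  {p : V → X} {Q : GainGraph} {piV : V → Q.V} {piE : G.edgeSet → Q.E} {col : Q.E → Fin 2}

lemma exists_rep (H : QuotientData a b φ d G σ hadj p Q piV piE col) {q : Q.E} {x y : Q.V}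
    (hq : Q.ends q = s(x, y)) :
    ∃ (e : G.edgeSet) (u w : V), piE e = q ∧ (e : Sym2 V) = s(u, w) ∧ piV u = x ∧ piV w = y := by
  obtain ⟨e, rfl⟩ := H.surjE q
  obtain ⟨⟨u, w⟩, he⟩ := Quot.exists_rep e.1
  replace he : (e : Sym2 V) = s(u, w) := he.symm
  rw [H.ends_eq, he, Sym2.map_mk, Sym2.eq_iff] at hq
  rcases hq with ⟨h1, h2⟩ | ⟨h1, h2⟩
  · exact ⟨e, u, w, rfl, he, h1, h2⟩
  · exact ⟨e, w, u, rfl, by rw [he, Sym2.eq_swap], h2, h1⟩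

lemma piV_sigma (H : QuotientData a b φ d G σ hadj p Q piV piE col) (v : V) :
    piV (σ v) = piV v := ((H.piV_eq v (σ v)).2 (Or.inr rfl)).symm

lemma piE_sigma (H : QuotientData a b φ d G σ hadj p Q piV piE col) (e : G.edgeSet) :
    piE (eSigma G σ hadj e) = piE e := ((H.piE_eq e _).2 (Or.inr rfl)).symm

lemma sigma_sigma (H : QuotientData a b φ d G σ hadj p Q piV piE col) (e : G.edgeSet) :
    eSigma G σ hadj (eSigma G σ hadj e) = e := by
  obtain ⟨e, he⟩ := e
  apply Subtype.ext
  induction e using Sym2.ind with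
  | _ u v => simp [eSigma, H.invol]

variable {r : V → ℤˣ} {c : ℤˣ} {ψ : Q.E → ℤˣ}

/-- A symmetric vector field has well-defined facet coordinates on the quotient. -/
lemma exists_coord (H : QuotientData a b φ d G σ hadj p Q piV piE col)
    (hr : ∀ v, r (σ v) = -c * r v)
    {z : V → ℂ ⊗[ℝ] X} (hz : ∀ v, z (σ v) = (-((c : ℤ) : ℂ)) • z v) :
    ∃ g : Fin 2 → Q.V → ℂ, ∀ j v,
      g j (piV v) = ((r v : ℤ) : ℂ) * cplxFunctional (φ j) (z v) := by
  refine ⟨fun j x => ((r (Function.surjInv H.surjV x) : ℤ) : ℂ) *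
    cplxFunctional (φ j) (z (Function.surjInv H.surjV x)), fun j v => ?_⟩
  have h1 := Function.surjInv_eq H.surjV (piV v)
  beta_reduce
  rcases (H.piV_eq _ _).1 h1.symm with h2 | h2
  · rw [h2]
  · rw [h2, hr, hz, map_smul, smul_eq_mul]
    push_cast
    linear_combination (((r v : ℤ) : ℂ) * cplxFunctional (φ j) (z v)) *
      unit_mul_self_cast (K := ℂ) c

/-- Every pair of quotient functions arises from a symmetric vector field. -/
lemma exists_lift (H : QuotientData a b φ d G σ hadj p Q piV piE col)
    (hr : ∀ v, r (σ v) = -c * r v) (g : Fin 2 → Q.V → ℂ) :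
    ∃ z : V → ℂ ⊗[ℝ] X, (∀ v, z (σ v) = (-((c : ℤ) : ℂ)) • z v) ∧ ∀ j v,
      g j (piV v) = ((r v : ℤ) : ℂ) * cplxFunctional (φ j) (z v) := by
  refine ⟨fun v => ∑ j, (((r v : ℤ) : ℂ) * g j (piV v)) • ((1 : ℂ) ⊗ₜ[ℝ] d j), fun v => ?_,
    fun j v => ?_⟩
  · rw [Finset.smul_sum]
    refine Finset.sum_congr rfl fun j _ => ?_
    rw [H.piV_sigma, hr, smul_smul]
    push_cast
    ring_nf
  · rw [H.coords.cplx_apply_sum, ← mul_assoc, unit_mul_self_cast, one_mul]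

variable [Fintype V] [DecidableEq V]

/-- The complexified differential intertwines the two symmetry actions. -/
lemma dfC_sigma (H : QuotientData a b φ d G σ hadj p Q piV piE col) {c : ℤˣ}
    {z : V → ℂ ⊗[ℝ] X} (hz : ∀ v, z (σ v) = (-((c : ℤ) : ℂ)) • z v) (e : G.edgeSet) :
    dfC G p z (eSigma G σ hadj e) = ((c : ℤ) : ℂ) * dfC G p z e := by
  obtain ⟨⟨u, w⟩, he⟩ := Quot.exists_rep e.1
  replace he : (e : Sym2 V) = s(u, w) := he.symm
  have huw : u ≠ w := by
    have := e.2
    rw [he] at this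
    exact G.ne_of_adj this
  have he' : (eSigma G σ hadj e : Sym2 V) = s(σ u, σ w) := by simp [eSigma, he]
  obtain ⟨s, hs, hdf⟩ := H.dfR_eq e u w he
  obtain ⟨t, ht, hdf'⟩ := H.dfR_eq _ _ _ he'
  have hts : t = -s := by
    rw [H.piE_sigma, H.symm, H.symm, ← neg_sub', norm_neg, map_neg, ← hs, mul_neg, ← neg_mul] at ht
    have hne : φ (col (piE e)) (p u - p w) ≠ 0 := by
      intro h0
      rw [h0, mul_zero, eq_comm, norm_eq_zero, sub_eq_zero] at hs
      exact huw (H.inj hs)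
    have h1 := mul_right_cancel₀ hne ht
    apply Units.ext
    have : (-(t : ℤ) : ℤ) = s := by exact_mod_cast h1
    rw [Units.val_neg, ← this, neg_neg]
  rw [dfC_apply e hdf, dfC_apply _ hdf', H.piE_sigma, hz, hz, hts]
  simp only [map_smul, smul_eq_mul]
  push_cast
  ring

lemma gainSol_iff (H : QuotientData a b φ d G σ hadj p Q piV piE col)
    (hψ : ∀ (e : G.edgeSet) (u w : V), (e : Sym2 V) = s(u, w) → ψ (piE e) = r u * r w)
    {z : V → ℂ ⊗[ℝ] X} {j : Fin 2} {g : Q.V → ℂ}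
    (hg : ∀ v, g (piV v) = ((r v : ℤ) : ℂ) * cplxFunctional (φ j) (z v))
    {T : Set Q.E} (hT : T ⊆ {q | col q = j}) :
    GainSol ψ T g ↔ ∀ e, piE e ∈ T → dfC G p z e = 0 := by
  have key : ∀ (e : G.edgeSet) (u w : V), (e : Sym2 V) = s(u, w) → piE e ∈ T →
      (dfC G p z e = 0 ↔ g (piV u) = ((ψ (piE e) : ℤ) : ℂ) * g (piV w)) := by
    intro e u w he heT
    obtain ⟨s, -, hdf⟩ := H.dfR_eq e u w he
    rw [show col (piE e) = j from hT heT] at hdf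
    rw [dfC_apply e hdf, hψ e u w he, hg, hg]
    have hs : (((s : ℤ) : ℝ) : ℂ) ≠ 0 := by exact_mod_cast s.ne_zero
    have hu : ((r u : ℤ) : ℂ) ≠ 0 := by exact_mod_cast (r u).ne_zero
    rw [mul_eq_zero, or_iff_right hs, sub_eq_zero]
    push_cast
    rw [mul_assoc, ← mul_assoc (((r w : ℤ) : ℂ)), unit_mul_self_cast, one_mul,
      mul_right_inj' hu]
  constructor
  · intro h e heT
    obtain ⟨⟨u, w⟩, he⟩ := Quot.exists_rep e.1
    replace he : (e : Sym2 V) = s(u, w) := he.symm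
    refine (key e u w he heT).2 (h _ heT _ _ ?_)
    rw [H.ends_eq, he, Sym2.map_mk]
  · intro h q hq x y hxy
    obtain ⟨e, u, w, rfl, he, rfl, rfl⟩ := H.exists_rep hxy
    exact (key e u w he hq).1 (h e hq)

lemma dfC_eq_zero_iff (H : QuotientData a b φ d G σ hadj p Q piV piE col)
    (hψ : ∀ (e : G.edgeSet) (u w : V), (e : Sym2 V) = s(u, w) → ψ (piE e) = r u * r w)
    {z : V → ℂ ⊗[ℝ] X} {g : Fin 2 → Q.V → ℂ}
    (hg : ∀ j v, g j (piV v) = ((r v : ℤ) : ℂ) * cplxFunctional (φ j) (z v)) :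
    dfC G p z = 0 ↔ ∀ j, GainSol ψ {q | col q = j} (g j) := by
  constructor
  · intro h j
    exact (H.gainSol_iff hψ (hg j) subset_rfl).2 fun e _ => by rw [h]; rfl
  · intro h
    funext e
    exact (H.gainSol_iff hψ (hg _) subset_rfl).1 (h (col (piE e))) e rfl

lemma chiIndependentC2_iff (H : QuotientData a b φ d G σ hadj p Q piV piE col)
    (hr : ∀ v, r (σ v) = -c * r v)
    (hψ : ∀ (e : G.edgeSet) (u w : V), (e : Sym2 V) = s(u, w) → ψ (piE e) = r u * r w)
    {χ : ℤˣ →* ℂ} (hχ : χ (-1) = ((c : ℤ) : ℂ)) :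
    ChiIndependentC2 G p σ hadj χ ↔ ∀ j, ∀ q ∈ {q | col q = j}, ∃ g : Q.V → ℂ,
      GainSol ψ ({q | col q = j} \ {q}) g ∧ ¬ GainSol ψ {q | col q = j} g := by
  classical
  simp only [ChiIndependentC2, mem_XchiC2_iff hχ, mem_YchiC2_iff hχ]
  constructor
  · intro h j q hq
    obtain ⟨e, rfl⟩ := H.surjE q
    let y : G.edgeSet → ℂ := fun f =>
      if f = e then 1 else if f = eSigma G σ hadj e then ((c : ℤ) : ℂ) else 0
    have hye : y e = 1 := if_pos rfl
    have hyse : y (eSigma G σ hadj e) = ((c : ℤ) : ℂ) := by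
      simp only [y, if_neg (H.free e), if_true]
    have hy0 : ∀ f, piE f ≠ piE e → y f = 0 := by
      intro f hf
      have h1 : f ≠ e := fun h => hf (by rw [h])
      have h2 : f ≠ eSigma G σ hadj e := fun h => hf (by rw [h, H.piE_sigma])
      simp only [y, if_neg h1, if_neg h2]
    have hy : ∀ f, y (eSigma G σ hadj f) = ((c : ℤ) : ℂ) * y f := by
      intro f
      by_cases hf : piE e = piE f
      · rcases (H.piE_eq _ _).1 hf with rfl | rfl
        · rw [hyse, hye, mul_one]
        · rw [H.sigma_sigma, hye, hyse, unit_mul_self_cast]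
      · rw [hy0 f (Ne.symm hf), hy0 _ (by rw [H.piE_sigma]; exact Ne.symm hf), mul_zero]
    obtain ⟨z, hz, hzy⟩ := h y hy
    obtain ⟨g, hg⟩ := H.exists_coord hr hz
    refine ⟨g j, (H.gainSol_iff hψ (hg j) Set.sdiff_subset).2 fun f hf => ?_, fun hs => ?_⟩
    · rw [hzy]
      exact hy0 f hf.2
    · have := (H.gainSol_iff hψ (hg j) subset_rfl).1 hs e hq
      rw [hzy, hye] at this
      exact one_ne_zero this
  · intro h y hy
    have hq : ∀ q : Q.E, ∃ z : V → ℂ ⊗[ℝ] X, (∀ v, z (σ v) = (-((c : ℤ) : ℂ)) • z v) ∧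
        (∀ e, piE e ≠ q → dfC G p z e = 0) ∧ ∀ e, piE e = q → dfC G p z e ≠ 0 := by
      intro q
      obtain ⟨g, hg, hg'⟩ := h (col q) q rfl
      obtain ⟨z, hz, hzg⟩ := H.exists_lift hr (Pi.single (col q) g)
      have hzg' := hzg (col q)
      rw [Pi.single_eq_same] at hzg'
      have hoff : ∀ e, piE e ≠ q → dfC G p z e = 0 := by
        intro e he
        by_cases hc : col (piE e) = col q
        · exact (H.gainSol_iff hψ hzg' Set.sdiff_subset).1 hg e ⟨hc, he⟩
        · have h0 : GainSol ψ {f | col f = col (piE e)}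
              ((Pi.single (col q) g : Fin 2 → Q.V → ℂ) (col (piE e))) := by
            rw [Pi.single_eq_of_ne hc]
            intro f _ u w _
            simp
          exact (H.gainSol_iff hψ (hzg _) subset_rfl).1 h0 e rfl
      refine ⟨z, hz, hoff, fun e he h0 => hg' ?_⟩
      refine (H.gainSol_iff hψ hzg' subset_rfl).2 fun f _ => ?_
      by_cases hf : piE f = q
      · rcases (H.piE_eq e f).1 (he.trans hf.symm) with rfl | rfl
        · exact h0
        · rw [H.dfC_sigma hz, h0, mul_zero]
      · exact hoff f hf
    choose z hz hoff hon using hq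
    obtain ⟨l, hl⟩ := H.surjE.hasRightInverse
    refine ⟨∑ q, (y (l q) / dfC G p (z q) (l q)) • z q, fun v => ?_, ?_⟩
    · simp only [Finset.sum_apply, Pi.smul_apply, hz, Finset.smul_sum]
      exact Finset.sum_congr rfl fun q _ => smul_comm _ _ _
    · funext e
      simp only [map_sum, map_smul, Finset.sum_apply, Pi.smul_apply, smul_eq_mul]
      rw [Finset.sum_eq_single (piE e) (fun q _ hq => by rw [hoff q e hq.symm, mul_zero])
        (by simp)]
      have hne := hon (piE e) (l (piE e)) (hl (piE e))
      have h1 := (H.piE_eq _ _).1 (hl (piE e))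
      generalize piE e = q at hne h1 ⊢
      rcases h1 with rfl | rfl
      · field_simp
      · rw [H.dfC_sigma (hz q), hy]
        field_simp

end QuotientData

end Quotient

section Rigidity

variable {V : Type}
variable {X : Type} [NormedAddCommGroup X] [NormedSpace ℝ X]
  {a b : X} {φ : Fin 2 → X →ₗ[ℝ] ℝ} {d : Fin 2 → X} {G : SimpleGraph V}
  [Fintype G.edgeSet] {σ : Equiv.Perm V} {hadj : ∀ u v : V, G.Adj u v ↔ G.Adj (σ u) (σ v)}
  {p : V → X} {Q : GainGraph} {piV : V → Q.V} {piE : G.edgeSet → Q.E} {col : Q.E → Fin 2}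

lemma chi0_neg_one : chi0 (-1) = (((1 : ℤˣ) : ℤ) : ℂ) := by simp [chi0]

lemma chi1_neg_one : chi1 (-1) = (((-1 : ℤˣ) : ℤ) : ℂ) := by simp [chi1]

namespace QuotientData

/-- A colour class is connected and spanning in `G` exactly when it is connected, spanning and
unbalanced in the quotient. -/
lemma forall_const_iff (H : QuotientData a b φ d G σ hadj p Q piV piE col) {ρ : V → ℤˣ}
    (hρ : ∀ v, ρ (σ v) = -ρ v)
    (hgain : ∀ (e : G.edgeSet) (u w : V), (e : Sym2 V) = s(u, w) → Q.gain (piE e) = ρ u * ρ w)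
    (j : Fin 2) :
    (∀ f : V → ℝ,
      (∀ (e : G.edgeSet) (u w : V), (e : Sym2 V) = s(u, w) → col (piE e) = j → f u = f w) →
      ∀ u w, f u = f w) ↔
    (∀ g : Q.V → ℝ, GainSol (fun _ => 1) {q | col q = j} g → ∀ x y, g x = g y) ∧
      ∀ g : Q.V → ℝ, GainSol Q.gain {q | col q = j} g → g = 0 := by
  have hsq : ∀ v, ((ρ v : ℤ) : ℝ) * ((ρ v : ℤ) : ℝ) = 1 := fun v => unit_mul_self_cast _
  have hends : ∀ (e : G.edgeSet) (u w : V), (e : Sym2 V) = s(u, w) →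
      Q.ends (piE e) = s(piV u, piV w) := by
    intro e u w he
    rw [H.ends_eq, he, Sym2.map_mk]
  constructor
  · intro h
    refine ⟨fun g hg x y => ?_, fun g hg => ?_⟩
    · obtain ⟨u, rfl⟩ := H.surjV x
      obtain ⟨w, rfl⟩ := H.surjV y
      refine h (fun v => g (piV v)) (fun e u w he hj => ?_) u w
      simpa using hg (piE e) hj _ _ (hends e u w he)
    · have h1 := h (fun v => ((ρ v : ℤ) : ℝ) * g (piV v)) (fun e u w he hj => by
        have h2 := hg (piE e) hj _ _ (hends e u w he)
        rw [hgain e u w he] at h2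
        push_cast at h2
        rw [h2]
        linear_combination ((ρ w : ℤ) : ℝ) * g (piV w) * hsq u)
      funext x
      obtain ⟨v, rfl⟩ := H.surjV x
      have h2 := h1 (σ v) v
      rw [H.piV_sigma, hρ] at h2
      push_cast at h2
      rw [Pi.zero_apply]
      linear_combination (-(1 : ℝ) / 2 * ((ρ v : ℤ) : ℝ)) * h2 - g (piV v) * hsq v
  · rintro ⟨hc, hu⟩ f hf
    have hf' : ∀ (e : G.edgeSet) (u w : V), (e : Sym2 V) = s(u, w) → col (piE e) = j →
        f (σ u) = f (σ w) := by
      intro e u w he hj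
      refine hf (eSigma G σ hadj e) _ _ (by simp [eSigma, he]) ?_
      rw [H.piE_sigma, hj]
    have hinv : ∀ v, f (σ v) = f v := by
      have hg : ∃ g : Q.V → ℝ, ∀ v, g (piV v) = ((ρ v : ℤ) : ℝ) * (f v - f (σ v)) := by
        refine ⟨fun x => ((ρ (Function.surjInv H.surjV x) : ℤ) : ℝ) *
          (f (Function.surjInv H.surjV x) - f (σ (Function.surjInv H.surjV x))), fun v => ?_⟩
        beta_reduce
        rcases (H.piV_eq _ _).1 (Function.surjInv_eq H.surjV (piV v)).symm with h2 | h2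
        · rw [h2]
        · rw [h2, hρ, H.invol]
          push_cast
          ring
      obtain ⟨g, hg⟩ := hg
      have hg0 : g = 0 := by
        refine hu g fun q hq x y hxy => ?_
        obtain ⟨e, u, w, rfl, he, rfl, rfl⟩ := H.exists_rep hxy
        rw [hg, hg, hgain e u w he, hf e u w he hq, hf' e u w he hq]
        push_cast
        linear_combination (-((ρ u : ℤ) : ℝ) * (f w - f (σ w))) * hsq w
      intro v
      have h1 := hg v
      rw [hg0, Pi.zero_apply] at h1
      linear_combination (f v - f (σ v)) * hsq v + ((ρ v : ℤ) : ℝ) * h1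
    have hg : ∃ g : Q.V → ℝ, ∀ v, g (piV v) = f v := by
      refine ⟨fun x => f (Function.surjInv H.surjV x), fun v => ?_⟩
      beta_reduce
      rcases (H.piV_eq _ _).1 (Function.surjInv_eq H.surjV (piV v)).symm with h2 | h2
      · rw [h2]
      · rw [h2, hinv]
    obtain ⟨g, hg⟩ := hg
    intro u w
    rw [← hg, ← hg]
    refine hc g (fun q hq x y hxy => ?_) _ _
    obtain ⟨e, u, w, rfl, he, rfl, rfl⟩ := H.exists_rep hxy
    rw [hg, hg, hf e u w he hq]
    simp

end QuotientData

variable [FiniteDimensional ℝ X]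

lemma FacetCoords.mem_TchiC2_chi0_iff (h : FacetCoords a b φ d) {η : X → ℂ ⊗[ℝ] X} :
    η ∈ TchiC2 X chi0 ↔ η = 0 := by
  refine ⟨fun hη => ?_, fun hη => hη ▸ Submodule.zero_mem _⟩
  simp only [TchiC2, Submodule.mem_inf, mem_TXC_iff h, Submodule.mem_iInf, LinearMap.mem_ker,
    LinearMap.sub_apply, LinearMap.smul_apply, LinearMap.proj_apply, sub_eq_zero] at hη
  obtain ⟨⟨z, rfl⟩, hη⟩ := hη
  have h1 := hη (-1) 0
  have h2 : z = -z := by simpa [chi0] using h1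
  funext x
  have h3 : (2 : ℂ) • z = 0 := by
    rw [two_smul]
    nth_rewrite 2 [h2]
    exact add_neg_cancel z
  exact (smul_eq_zero.1 h3).resolve_left two_ne_zero

lemma FacetCoords.mem_TchiC2_chi1_iff (h : FacetCoords a b φ d) {η : X → ℂ ⊗[ℝ] X} :
    η ∈ TchiC2 X chi1 ↔ ∃ z, η = fun _ => z := by
  simp only [TchiC2, Submodule.mem_inf, mem_TXC_iff h, Submodule.mem_iInf, LinearMap.mem_ker,
    LinearMap.sub_apply, LinearMap.smul_apply, LinearMap.proj_apply, sub_eq_zero]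
  refine and_iff_left_of_imp ?_
  rintro ⟨z, rfl⟩ γ x
  rcases Int.units_eq_one_or γ with rfl | rfl <;> simp [chi1]

namespace QuotientData

/-- Infinitesimal rigidity means that each colour class of edges is connected and spanning. -/
lemma infRigid_iff_forall_const (H : QuotientData a b φ d G σ hadj p Q piV piE col) :
    InfRigid G p ↔ ∀ j, ∀ f : V → ℝ,
      (∀ (e : G.edgeSet) (u w : V), (e : Sym2 V) = s(u, w) → col (piE e) = j → f u = f w) →
      ∀ u w, f u = f w := by
  constructor
  · intro h j f hf u w
    have h0 : dfR G p (fun v => f v • d j) = 0 := by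
      funext e
      obtain ⟨⟨u, w⟩, he⟩ := Quot.exists_rep e.1
      replace he : (e : Sym2 V) = s(u, w) := he.symm
      obtain ⟨s, -, hs⟩ := H.dfR_eq e u w he
      rw [hs, ← sub_smul, map_smul, H.coords.apply_dual, smul_eq_mul]
      by_cases hj : col (piE e) = j
      · rw [hf e u w he hj, sub_self, zero_mul, mul_zero, Pi.zero_apply]
      · rw [if_neg hj, mul_zero, mul_zero, Pi.zero_apply]
    obtain ⟨η, hη, hηp⟩ := h _ h0
    have h1 := hη.eq_const H.coords (p u) (p w)
    rw [hηp, hηp] at h1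
    have h2 := congrArg (φ j) h1
    simpa [H.coords.apply_dual] using h2
  · intro h x hx
    rcases isEmpty_or_nonempty V with hV | ⟨⟨v⟩⟩
    · exact ⟨_, isInfRigidMotion_const 0, fun v => isEmptyElim v⟩
    · refine ⟨_, isInfRigidMotion_const (x v), fun w => H.coords.ext fun j => ?_⟩
      refine h j (fun v => φ j (x v)) (fun e u w he hj => ?_) v w
      obtain ⟨s, -, hs⟩ := H.dfR_eq e u w he
      have h1 := hs x
      rw [hx, Pi.zero_apply, eq_comm, mul_eq_zero, hj, map_sub, sub_eq_zero] at h1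
      exact h1.resolve_left (by exact_mod_cast s.ne_zero)

variable [Fintype V] [DecidableEq V]

lemma chiRigidC2_chi0_iff (H : QuotientData a b φ d G σ hadj p Q piV piE col) {ρ : V → ℤˣ}
    (hρ : ∀ v, ρ (σ v) = -ρ v)
    (hgain : ∀ (e : G.edgeSet) (u w : V), (e : Sym2 V) = s(u, w) → Q.gain (piE e) = ρ u * ρ w) :
    ChiRigidC2 G p σ chi0 ↔
      ∀ j, ∀ g : Q.V → ℂ, GainSol Q.gain {q | col q = j} g → g = 0 := by
  have hr : ∀ v, ρ (σ v) = -1 * ρ v := fun v => by rw [hρ, neg_one_mul]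
  simp only [ChiRigidC2, mem_XchiC2_iff chi0_neg_one, H.coords.mem_TchiC2_chi0_iff]
  constructor
  · intro h j g hg
    obtain ⟨z, hz, hzg⟩ := H.exists_lift hr (Pi.single j g)
    have h0 : dfC G p z = 0 := by
      refine (H.dfC_eq_zero_iff hgain hzg).2 fun i => ?_
      by_cases hi : i = j
      · subst hi
        rwa [Pi.single_eq_same]
      · rw [Pi.single_eq_of_ne hi]
        intro e _ u w _
        simp
    obtain ⟨η, rfl, hη⟩ := h z hz h0
    funext x
    obtain ⟨v, rfl⟩ := H.surjV x
    have := hzg j v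
    rw [Pi.single_eq_same, ← hη, map_zero, Pi.zero_apply, map_zero, mul_zero] at this
    rw [this, Pi.zero_apply]
  · intro h z hz h0
    obtain ⟨g, hg⟩ := H.exists_coord hr hz
    refine ⟨0, rfl, ?_⟩
    rw [map_zero]
    funext v
    refine (H.coords.cplx_ext fun j => ?_).symm
    have h1 := hg j v
    rw [h j _ ((H.dfC_eq_zero_iff hgain hg).1 h0 j), Pi.zero_apply, eq_comm, mul_eq_zero] at h1
    rw [h1.resolve_left (by exact_mod_cast (ρ v).ne_zero), Pi.zero_apply, map_zero]

lemma chiRigidC2_chi1_iff (H : QuotientData a b φ d G σ hadj p Q piV piE col) :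
    ChiRigidC2 G p σ chi1 ↔
      ∀ j, ∀ g : Q.V → ℂ, GainSol (fun _ => 1) {q | col q = j} g → ∀ x y, g x = g y := by
  have hr : ∀ v : V, (fun _ => 1 : V → ℤˣ) (σ v) = -(-1) * (fun _ => 1 : V → ℤˣ) v := by simp
  have hψ : ∀ (e : G.edgeSet) (u w : V), (e : Sym2 V) = s(u, w) →
      (fun _ => 1 : Q.E → ℤˣ) (piE e) = (fun _ => 1 : V → ℤˣ) u * (fun _ => 1 : V → ℤˣ) w := by
    simp
  simp only [ChiRigidC2, mem_XchiC2_iff chi1_neg_one, H.coords.mem_TchiC2_chi1_iff]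
  constructor
  · intro h j g hg x y
    obtain ⟨z, hz, hzg⟩ := H.exists_lift (r := fun _ => 1) hr (Pi.single j g)
    have h0 : dfC G p z = 0 := by
      refine (H.dfC_eq_zero_iff (ψ := fun _ => 1) hψ hzg).2 fun i => ?_
      by_cases hi : i = j
      · subst hi
        rwa [Pi.single_eq_same]
      · rw [Pi.single_eq_of_ne hi]
        intro e _ u w _
        simp
    obtain ⟨_, ⟨w, rfl⟩, rfl⟩ := h z hz h0
    obtain ⟨u, rfl⟩ := H.surjV x
    obtain ⟨v, rfl⟩ := H.surjV y
    have h1 := hzg j u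
    have h2 := hzg j v
    rw [Pi.single_eq_same] at h1 h2
    rw [h1, h2]
    rfl
  · intro h z hz h0
    obtain ⟨g, hg⟩ := H.exists_coord (r := fun _ => 1) hr hz
    rcases isEmpty_or_nonempty V with hV | ⟨⟨v⟩⟩
    · exact ⟨0, ⟨0, rfl⟩, Subsingleton.elim _ _⟩
    · refine ⟨_, ⟨z v, rfl⟩, funext fun w => H.coords.cplx_ext fun j => ?_⟩
      have h1 := hg j v
      rw [h j _ ((H.dfC_eq_zero_iff (ψ := fun _ => 1) hψ hg).1 h0 j) _ (piV w), hg j w] at h1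
      change cplxFunctional (φ j) (z v) = cplxFunctional (φ j) (z w)
      simpa using h1.symm

end QuotientData

end Rigidity

/-- The quotient data of a well-positioned half-turn symmetric framework exist, and the
monochrome subgraphs are the colour classes. -/
lemma exists_quotientData {V : Type} [Fintype V]
    {X : Type} [NormedAddCommGroup X] [NormedSpace ℝ X] [FiniteDimensional ℝ X]
    {a b : X} {φ : Fin 2 → X →ₗ[ℝ] ℝ} {d : Fin 2 → X} (h : FacetCoords a b φ d)
    {G : SimpleGraph V} [Fintype G.edgeSet] {σ : Equiv.Perm V} (hinv : ∀ v, σ (σ v) = v)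
    {hadj : ∀ u v : V, G.Adj u v ↔ G.Adj (σ u) (σ v)}
    (hfreeE : ∀ e : G.edgeSet, eSigma G σ hadj e ≠ e)
    {p : V → X} (hpinj : Function.Injective p) (hwp : WellPositioned G p)
    (hsymm : ∀ v, p (σ v) = -p v)
    {Q : GainGraph} {piV : V → Q.V} {piE : G.edgeSet → Q.E}
    (hpiVs : Function.Surjective piV)
    (hpiV : ∀ u v : V, piV u = piV v ↔ (v = u ∨ v = σ u))
    (hpiEs : Function.Surjective piE)
    (hpiE : ∀ e f : G.edgeSet, piE e = piE f ↔ (f = e ∨ f = eSigma G σ hadj e))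
    (hQends : ∀ e : G.edgeSet, Q.ends (piE e) = Sym2.map piV e.1) :
    ∃ col : Q.E → Fin 2, QuotientData a b φ d G σ hadj p Q piV piE col ∧
      ∀ i, monochrome G a b p Q piE i = {q | col q = i} := by
  choose c hc using existsUnique_edgeColour h hpinj hwp
  have hne : ∀ (e : G.edgeSet) (u w : V), (e : Sym2 V) = s(u, w) → u ≠ w := by
    intro e u w he
    have := e.2
    rw [he] at this
    exact G.ne_of_adj this
  have hcσ : ∀ e, c (eSigma G σ hadj e) = c e := by
    intro e
    obtain ⟨⟨u, w⟩, he⟩ := Quot.exists_rep e.1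
    replace he : (e : Sym2 V) = s(u, w) := he.symm
    have he' : (eSigma G σ hadj e : Sym2 V) = s(σ u, σ w) := by simp [eSigma, he]
    have h1 := (hc (eSigma G σ hadj e) _).2 rfl
    rw [he', edgeColour_iff h hpinj (hne _ _ _ he'), hsymm, hsymm, ← neg_sub', norm_neg, map_neg,
      abs_neg, ← edgeColour_iff h hpinj (hne _ _ _ he), ← he] at h1
    exact (hc _ _).1 h1
  obtain ⟨l, hl⟩ := hpiEs.hasRightInverse
  have hcol : ∀ e, c (l (piE e)) = c e := by
    intro e
    rcases (hpiE _ _).1 (hl (piE e)).symm with h1 | h1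
    · rw [h1]
    · rw [h1, hcσ]
  refine ⟨fun q => c (l q), ⟨h, hinv, hfreeE, hpinj, hsymm, hpiVs, hpiV, hpiEs, hpiE, hQends,
    fun e u w he => ?_⟩, fun i => ?_⟩
  · rw [hcol]
    have h1 := (hc e _).2 rfl
    rw [he, edgeColour_iff h hpinj (hne _ _ _ he)] at h1
    obtain ⟨s, hs⟩ := exists_unit_mul_eq_norm h1
    exact ⟨s, hs, dfR_apply h hwp e he hs⟩
  · ext q
    constructor
    · rintro ⟨e, rfl, he⟩
      exact (hcol e).trans ((hc e i).1 he).symm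
    · intro hq
      exact ⟨l q, hl q, (hc _ _).2 hq.symm⟩

theorem C2_grid_geometric
    {V : Type} [Fintype V] [DecidableEq V]
    {X : Type} [NormedAddCommGroup X] [NormedSpace ℝ X] [FiniteDimensional ℝ X]
    (hdim : Module.finrank ℝ X = 2)
    (a b : X) (hab : LinearIndependent ℝ ![a, b])
    (hball : Metric.closedBall (0 : X) 1 = convexHull ℝ {a, b, -a, -b})
    (G : SimpleGraph V) [Fintype G.edgeSet]
    (σ : Equiv.Perm V) (hinv : ∀ v, σ (σ v) = v) (hfreeV : ∀ v, σ v ≠ v)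
    (hadj : ∀ u v : V, G.Adj u v ↔ G.Adj (σ u) (σ v))
    (hfreeE : ∀ e : G.edgeSet, eSigma G σ hadj e ≠ e)
    (p : V → X) (hpinj : Function.Injective p)
    (hwp : WellPositioned G p)
    (hsymm : ∀ v, p (σ v) = -p v)
    -- the quotient gain graph `(G₀, ψ)` of `(G, θ)`
    (Q : GainGraph) (piV : V → Q.V) (piE : G.edgeSet → Q.E) (ρ : V → ℤˣ)
    (hpiVs : Function.Surjective piV)
    (hpiV : ∀ u v : V, piV u = piV v ↔ (v = u ∨ v = σ u))
    (hpiEs : Function.Surjective piE)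
    (hpiE : ∀ e f : G.edgeSet, piE e = piE f ↔ (f = e ∨ f = eSigma G σ hadj e))
    (hQends : ∀ e : G.edgeSet, Q.ends (piE e) = Sym2.map piV e.1)
    (hrho : ∀ v : V, ρ (σ v) = -ρ v)
    (hQgain : ∀ (e : G.edgeSet) (u w : V), (e : Sym2 V) = s(u, w) →
      Q.gain (piE e) = ρ u * ρ w) :
    (ChiIsostaticC2 G p σ hadj chi0 ↔
      (SpanningUnbalancedMapGraph Q (monochrome G a b p Q piE 0) ∧
        SpanningUnbalancedMapGraph Q (monochrome G a b p Q piE 1) ∧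
        Disjoint (monochrome G a b p Q piE 0) (monochrome G a b p Q piE 1))) ∧
    (ChiIsostaticC2 G p σ hadj chi1 ↔
      (SpanningTree Q (monochrome G a b p Q piE 0) ∧
        SpanningTree Q (monochrome G a b p Q piE 1) ∧
        Disjoint (monochrome G a b p Q piE 0) (monochrome G a b p Q piE 1))) ∧
    (InfRigid G p ↔
      (ContainsConnSpanningUnbalMap Q (monochrome G a b p Q piE 0) ∧
        ContainsConnSpanningUnbalMap Q (monochrome G a b p Q piE 1))) := by
  obtain ⟨φ, d, h⟩ := exists_facetCoords hdim a b hab hball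
  obtain ⟨col, H, hmono⟩ := exists_quotientData h hinv hfreeE hpinj hwp hsymm hpiVs hpiV hpiEs
    hpiE hQends
  have hdisj : Disjoint (monochrome G a b p Q piE 0) (monochrome G a b p Q piE 1) := by
    rw [hmono, hmono, Set.disjoint_left]
    intro q h0 h1
    exact zero_ne_one (h0.symm.trans h1)
  refine ⟨?_, ?_, ?_⟩
  · rw [ChiIsostaticC2, H.chiRigidC2_chi0_iff hrho hQgain,
      H.chiIndependentC2_iff (fun v => by rw [hrho, neg_one_mul]) hQgain chi0_neg_one,
      and_iff_left hdisj, ← forall_and, Fin.forall_fin_two, spanningUnbalancedMapGraph_iff ℂ,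
      spanningUnbalancedMapGraph_iff ℂ, hmono, hmono]
  · rw [ChiIsostaticC2, H.chiRigidC2_chi1_iff,
      H.chiIndependentC2_iff (r := fun _ => 1) (ψ := fun _ => 1) (fun v => by simp)
        (fun e u w _ => by simp) chi1_neg_one,
      and_iff_left hdisj, ← forall_and, Fin.forall_fin_two, spanningTree_iff ℂ,
      spanningTree_iff ℂ, hmono, hmono]
  · rw [H.infRigid_iff_forall_const, Fin.forall_fin_two, H.forall_const_iff hrho hQgain,
      H.forall_const_iff hrho hQgain, containsConnSpanningUnbalMap_iff ℝ,
      containsConnSpanningUnbalMap_iff ℝ, hmono, hmono]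

end ZGain
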